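/- Let S₁(X) denote the number of integers q ≤ X with q ≡ 1 (mod 4) for which the Erdős conjecture is false mod q. Then limsup_{X→∞} S₁(X)/(X/4) ≤ ∏_{p odd prime} (1 + p/((p-1)(p²-1))) − 1, where the product is over all odd primes p. -/

import Mathlib

open Filter Topology Finset

/-- `f : ℕ → ℤ` is Erdősian mod `q`: periodic with period `q`, takes values `±1`
off multiples of `q`, and `0` on multiples of `q`. -/
def IsErdosian (q : ℕ) (f : ℕ → ℤ) : Prop :=
  (∀ n : ℕ, 1 ≤ n → f (n + q) = f n) ∧
  (∀ n : ℕ, 1 ≤ n → ¬ q ∣ n → f n = 1 ∨ f n = -1) ∧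
  (∀ n : ℕ, 1 ≤ n → q ∣ n → f n = 0)

/-- The Erdős conjecture is false mod `q`: there is an Erdősian function mod `q`
whose partial sums `∑_{n=1}^N f(n)/n` tend to `0`. -/
def ErdosConjectureFalse (q : ℕ) : Prop :=
  ∃ f : ℕ → ℤ, IsErdosian q f ∧
    Tendsto (fun N : ℕ => ∑ n ∈ Finset.Icc 1 N, (f n : ℝ) / n) atTop (nhds 0)

/-- The Erdős conjecture holds (is true) mod `q`. -/
def ErdosConjectureHolds (q : ℕ) : Prop := ¬ ErdosConjectureFalse q

section Helpers
open NumberField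

lemma bk_factor_one (a : ℂ) (k : ℕ) : ∀ (g : ℂ → ℂ), Differentiable ℂ g →
    (k : ℕ∞) ≤ analyticOrderAt g a →
    ∃ h : ℂ → ℂ, Differentiable ℂ h ∧ ∀ t, g t = (t - a) ^ k * h t := by
  induction k with
  | zero => intro g hg _; exact ⟨g, hg, by simp⟩
  | succ k ih =>
    intro g hg hk
    obtain ⟨h, hh, e⟩ := ih g hg (le_trans (by exact_mod_cast Nat.le_succ k) hk)
    have hha : AnalyticAt ℂ h a := hh.analyticAt a
    have h0 : h a = 0 := by
      by_contra hne
      have : analyticOrderAt g a = k := by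
        rw [(hg.analyticAt a).analyticOrderAt_eq_natCast]
        exact ⟨h, hha, hne, Eventually.of_forall fun t => by simp [e t]⟩
      rw [this] at hk
      have : k + 1 ≤ k := by exact_mod_cast hk
      omega
    refine ⟨dslope h a, ?_, ?_⟩
    · have := (Complex.differentiableOn_dslope (f := h) (c := a) (s := Set.univ) univ_mem).2
        hh.differentiableOn
      exact differentiableOn_univ.1 this
    · intro t
      have h1 : (t - a) * dslope h a t = h t := by
        have := sub_smul_dslope h a t
        simpa [h0] using this
      rw [e t, pow_succ, mul_assoc, h1]

lemma bk_factor (g : ℂ → ℂ) (hg : Differentiable ℂ g) (k S : ℕ)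
    (hz : ∀ s < S, ∀ l < k, iteratedDeriv l g (s : ℂ) = 0) :
    ∃ h : ℂ → ℂ, Differentiable ℂ h ∧ ∀ t, g t = (∏ s ∈ range S, (t - (s : ℂ)) ^ k) * h t := by
  induction S with
  | zero => exact ⟨g, hg, by simp⟩
  | succ S ih =>
    obtain ⟨h, hh, e⟩ := ih fun s hs => hz s (by omega)
    have ho : (k : ℕ∞) ≤ analyticOrderAt g (S : ℂ) := by
      rw [natCast_le_analyticOrderAt_iff_iteratedDeriv_eq_zero (hg.analyticAt _)]
      exact hz S (by omega)
    set P : ℂ → ℂ := fun t => ∏ s ∈ range S, (t - (s : ℂ)) ^ k with hP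
    have hPd : Differentiable ℂ P := by rw [hP]; fun_prop
    have hgP : g = P * h := by ext t; simp [e t, hP]
    have hP0 : analyticOrderAt P (S : ℂ) = 0 := by
      rw [(hPd.analyticAt _).analyticOrderAt_eq_zero]
      simp only [hP, Finset.prod_ne_zero_iff, mem_range]
      intro s hs
      refine pow_ne_zero _ (sub_ne_zero.2 ?_)
      exact_mod_cast (ne_of_gt hs)
    rw [hgP, analyticOrderAt_mul (hPd.analyticAt _) (hh.analyticAt _), hP0, zero_add] at ho
    obtain ⟨h2, hh2, e2⟩ := bk_factor_one _ k h hh ho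
    refine ⟨h2, hh2, fun t => ?_⟩
    rw [e t, e2 t, prod_range_succ, mul_assoc]

lemma bk_iterDeriv (a : ℂ) (k : ℕ) : ∀ (H : ℂ → ℂ), Differentiable ℂ H →
    iteratedDeriv k (fun t => (t - a) ^ k * H t) a = (k.factorial : ℂ) * H a := by
  induction k with
  | zero => intro H _; simp
  | succ k ih =>
    intro H hH
    rw [iteratedDeriv_succ']
    have hd : Differentiable ℂ (deriv H) := by
      exact (hH.contDiff (n := 2)).differentiable_deriv_two
    have : deriv (fun t => (t - a) ^ (k + 1) * H t) =
        fun t => (t - a) ^ k * (((k : ℂ) + 1) * H t + (t - a) * deriv H t) := by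
      ext t
      have h1 : HasDerivAt (fun t : ℂ => (t - a) ^ (k + 1)) (((k + 1 : ℕ) : ℂ) * (t - a) ^ k * 1) t := by
        exact ((hasDerivAt_id t).sub_const a).fun_pow (k + 1)
      rw [(h1.fun_mul (hH t).hasDerivAt).deriv]
      push_cast; ring
    rw [this, ih _ (by fun_prop)]
    rw [Nat.factorial_succ]; push_cast; simp; ring

lemma bk_schwarz (g : ℂ → ℂ) (hg : Differentiable ℂ g) (k S : ℕ) (R B : ℝ)
    (hS : 0 < S) (hR : 2 * (S : ℝ) ≤ R)
    (hz : ∀ s < S, ∀ l < k, iteratedDeriv l g (s : ℂ) = 0)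
    (hB : ∀ t : ℂ, ‖t‖ = R → ‖g t‖ ≤ B) (s0 : ℕ) (hs0 : s0 < S) :
    ‖iteratedDeriv k g (s0 : ℂ)‖ ≤ k.factorial * (2 * S / R) ^ (k * S) * B := by
  obtain ⟨h, hh, e⟩ := bk_factor g hg k S hz
  have hSr : (1 : ℝ) ≤ S := by exact_mod_cast hS
  have hR0 : 0 < R := by linarith
  have hsR : ∀ s < S, (s : ℝ) ≤ S := fun s hs => by exact_mod_cast hs.le
  -- bound for h
  have hlow : ∀ t : ℂ, ‖t‖ = R → (R / 2) ^ (k * S) ≤ ‖∏ s ∈ range S, (t - (s : ℂ)) ^ k‖ := by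
    intro t ht
    rw [norm_prod]
    have : (R / 2) ^ (k * S) = ∏ s ∈ range S, (R / 2) ^ k := by
      rw [prod_const, card_range, pow_mul]
    rw [this]
    refine prod_le_prod (fun _ _ => by positivity) fun s hs => ?_
    rw [norm_pow]
    refine pow_le_pow_left₀ (by positivity) ?_ k
    have h1 := norm_sub_norm_le t (s : ℂ)
    rw [ht, Complex.norm_natCast] at h1
    have := hsR s (mem_range.1 hs)
    linarith
  have hhb : ∀ z ∈ closure (Metric.ball (0 : ℂ) R), ‖h z‖ ≤ B / (R / 2) ^ (k * S) := by
    intro z hzc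
    refine Complex.norm_le_of_forall_mem_frontier_norm_le Metric.isBounded_ball hh.diffContOnCl ?_ hzc
    intro t ht
    rw [frontier_ball _ hR0.ne'] at ht
    have ht' : ‖t‖ = R := by simpa using ht
    rw [le_div_iff₀ (by positivity)]
    calc ‖h t‖ * (R / 2) ^ (k * S) ≤ ‖h t‖ * ‖∏ s ∈ range S, (t - (s : ℂ)) ^ k‖ := by
          gcongr; exact hlow t ht'
      _ = ‖g t‖ := by rw [e t, norm_mul, mul_comm]
      _ ≤ B := hB t ht'
  have hhs : ‖h s0‖ ≤ B / (R / 2) ^ (k * S) := by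
    apply hhb
    apply subset_closure
    have := hsR s0 hs0
    simp; linarith
  have hg2 : g = fun t => (t - (s0 : ℂ)) ^ k * ((∏ s ∈ (range S).erase s0, (t - (s : ℂ)) ^ k) * h t) := by
    ext t
    rw [e t, ← mul_assoc, mul_prod_erase _ (fun s : ℕ => (t - (s : ℂ)) ^ k) (mem_range.2 hs0)]
  have hup : ‖∏ s ∈ (range S).erase s0, ((s0 : ℂ) - (s : ℂ)) ^ k‖ ≤ (S : ℝ) ^ (k * S) := by
    rw [norm_prod]
    calc ∏ s ∈ (range S).erase s0, ‖((s0 : ℂ) - (s : ℂ)) ^ k‖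
        ≤ ∏ s ∈ (range S).erase s0, (S : ℝ) ^ k := by
          refine prod_le_prod (fun _ _ => norm_nonneg _) fun s hs => ?_
          rw [norm_pow]
          refine pow_le_pow_left₀ (norm_nonneg _) ?_ k
          have h1 := mem_range.1 (mem_of_mem_erase hs)
          have : ((s0 : ℂ) - (s : ℂ)) = (((s0 : ℝ) - (s : ℝ) : ℝ) : ℂ) := by push_cast; ring
          rw [this, Complex.norm_real, Real.norm_eq_abs, abs_le]
          have := hsR s h1
          have := hsR s0 hs0
          have : (0 : ℝ) ≤ s := by positivity
          have : (0 : ℝ) ≤ s0 := by positivity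
          constructor <;> linarith
      _ = ((S : ℝ) ^ k) ^ (S - 1) := by rw [prod_const, card_erase_of_mem (mem_range.2 hs0), card_range]
      _ ≤ (S : ℝ) ^ (k * S) := by
          rw [← pow_mul]
          exact pow_le_pow_right₀ hSr (Nat.mul_le_mul le_rfl (Nat.sub_le _ _))
  rw [hg2, bk_iterDeriv _ k _ (by fun_prop), norm_mul, norm_mul, Complex.norm_natCast, mul_assoc]
  have hB0 : 0 ≤ B := le_trans (norm_nonneg _) (hB (R : ℂ) (by simp [abs_of_pos hR0]))
  refine mul_le_mul_of_nonneg_left ?_ (by positivity)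
  calc _ ≤ (S : ℝ) ^ (k * S) * (B / (R / 2) ^ (k * S)) := by gcongr
    _ = _ := by
      rw [div_pow, div_pow, mul_pow]; field_simp


noncomputable def bkPhi {β I : Type*} [Fintype β] [Fintype I] (p : β → ℂ) (a : I → β → ℂ)
    (s : I → ℕ) : (β → ℂ) →ₗ[ℂ] ℂ where
  toFun c := ∑ n, p n * c n * Complex.exp (∑ i, (s i : ℂ) * a i n)
  map_add' c c' := by
    rw [← sum_add_distrib]; refine sum_congr rfl fun n _ => ?_
    simp only [Pi.add_apply]; ring
  map_smul' r c := by
    simp only [RingHom.id_apply, smul_eq_mul, mul_sum]; refine sum_congr rfl fun n _ => ?_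
    simp only [Pi.smul_apply, smul_eq_mul]; ring

lemma bkPhi_apply {β I : Type*} [Fintype β] [Fintype I] (p : β → ℂ) (a : I → β → ℂ)
    (s : I → ℕ) (c : β → ℂ) :
    bkPhi p a s c = ∑ n, p n * c n * Complex.exp (∑ i, (s i : ℂ) * a i n) := rfl

lemma bk_change {β ι κ : Type*} [Fintype ι] (Φ : (β → ℂ) →ₗ[ℂ] ℂ) (a : ι → β → ℂ)
    (b : κ → β → ℂ) (u : κ → ι → ℂ) (hb : ∀ k, b k = ∑ i, u k i • a i) (C B : ℝ)
    (hC : ∀ k, ∑ i, ‖u k i‖ ≤ C) (hC0 : 0 ≤ C) (hB0 : 0 ≤ B) (N : ℕ)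
    (h : ∀ l : List ι, l.length = N → ‖Φ ((l.map a).prod)‖ ≤ B) :
    ∀ l : List κ, l.length = N → ‖Φ ((l.map b).prod)‖ ≤ C ^ N * B := by
  have key : ∀ (l : List κ) (m : List ι), l.length + m.length = N →
      ‖Φ ((l.map b).prod * (m.map a).prod)‖ ≤ C ^ l.length * B := by
    intro l
    induction l with
    | nil => intro m hm; simpa using h m (by simpa using hm)
    | cons k l ih =>
      intro m hm
      have e : ((k :: l).map b).prod * (m.map a).prod
          = ∑ i, u k i • ((l.map b).prod * ((i :: m).map a).prod) := by
        simp only [List.map_cons, List.prod_cons]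
        rw [hb k, sum_mul, sum_mul]
        refine sum_congr rfl fun i _ => ?_
        simp only [smul_mul_assoc]
        congr 1
        ring
      rw [e, map_sum]
      calc ‖∑ i, Φ (u k i • ((l.map b).prod * ((i :: m).map a).prod))‖
          ≤ ∑ i, ‖u k i‖ * (C ^ l.length * B) := by
            refine norm_sum_le_of_le _ fun i _ => ?_
            rw [map_smul, norm_smul]
            refine mul_le_mul_of_nonneg_left (ih _ ?_) (norm_nonneg _)
            simp at hm ⊢; omega
        _ = (∑ i, ‖u k i‖) * (C ^ l.length * B) := by rw [sum_mul]
        _ ≤ C * (C ^ l.length * B) := by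
            refine mul_le_mul_of_nonneg_right (hC k) (by positivity)
        _ = _ := by simp [pow_succ]; ring
  intro l hl
  have := key l [] (by simpa using hl)
  simpa [hl] using this

lemma bk_majority {I : Type*} [Fintype I] [DecidableEq I] [Nonempty I] (l : List I) :
    ∃ j, l.length ≤ Fintype.card I * l.count j := by
  by_contra! h
  have h1 : ∑ j, l.count j = l.length := by
    have := Multiset.sum_count_eq_card (s := (univ : Finset I)) (m := (l : Multiset I)) (by simp)
    simpa using this
  have h2 : ∑ j : I, Fintype.card I * l.count j < ∑ j : I, l.length :=
    sum_lt_sum_of_nonempty univ_nonempty fun j _ => h j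
  rw [← mul_sum, h1] at h2
  simp at h2

lemma bk_iter_exp {β : Type*} [Fintype β] (c b : β → ℂ) (l : ℕ) :
    iteratedDeriv l (fun t : ℂ => ∑ n, c n * Complex.exp (t * b n)) =
      fun t => ∑ n, c n * b n ^ l * Complex.exp (t * b n) := by
  induction l with
  | zero => simp
  | succ l ih =>
    rw [iteratedDeriv_succ, ih]
    ext t
    have : HasDerivAt (fun t : ℂ => ∑ n, c n * b n ^ l * Complex.exp (t * b n))
        (∑ n, c n * b n ^ l * (Complex.exp (t * b n) * (1 * b n))) t := by
      refine HasDerivAt.fun_sum fun n _ => ?_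
      exact (((hasDerivAt_id t).mul_const (b n)).cexp).const_mul _
    rw [this.deriv]
    refine sum_congr rfl fun n _ => ?_
    ring

lemma bk_list_bound {β I : Type*} (a : I → β → ℂ) (W : ℝ) (hW : 0 ≤ W)
    (ha : ∀ i n, ‖a i n‖ ≤ W) (l : List I) (n : β) : ‖(l.map a).prod n‖ ≤ W ^ l.length := by
  induction l with
  | nil => simp
  | cons i l ih =>
    simp only [List.map_cons, List.prod_cons, Pi.mul_apply, norm_mul, List.length_cons, pow_succ']
    exact mul_le_mul (ha i n) ih (norm_nonneg _) hW

lemma bk_analytic {β I : Type*} [Fintype β] [Fintype I] [DecidableEq I] [Nonempty I]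
    (p : β → ℂ) (a : I → β → ℂ)
    (S N : ℕ) (hS : 0 < S) (W Pm R : ℝ) (hW : 1 ≤ W) (hPm : 0 ≤ Pm) (hR : 2 * (S : ℝ) ≤ R)
    (hp : ∀ n, ‖p n‖ ≤ Pm) (ha : ∀ i n, ‖a i n‖ ≤ W)
    (hz : ∀ s : I → ℕ, (∀ i, s i < S) → ∀ l : List I, l.length < N →
      bkPhi p a s ((l.map a).prod) = 0)
    (s : I → ℕ) (hs : ∀ i, s i < S) (l : List I) (hl : l.length = N) :
    ∃ k, k ≤ N ∧ N ≤ Fintype.card I * k ∧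
    ‖bkPhi p a s ((l.map a).prod)‖ ≤ k.factorial * (2 * S / R) ^ (k * S) *
      (Fintype.card β * (Pm * W ^ N * Real.exp (Fintype.card I * S * W + R * W))) := by
  obtain ⟨j, hj⟩ := bk_majority l
  set k := l.count j with hk
  set m := l.filter (fun i => !(i == j)) with hm
  have hprod : (l.map a).prod = a j ^ k * (m.map a).prod := by
    have h1 := List.filter_append_perm (fun i => i == j) l
    have h2 := (h1.map a).prod_eq
    rw [← h2, List.map_append, List.prod_append, List.filter_beq, List.map_replicate,
      List.prod_replicate]
  have hlen : k + m.length = N := by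
    have h1 := (List.filter_append_perm (fun i => i == j) l).length_eq
    rw [List.length_append, List.filter_beq, List.length_replicate, hl] at h1
    exact h1
  refine ⟨k, by omega, by omega, ?_⟩
  set c : β → ℂ := fun n => p n * (m.map a).prod n *
    Complex.exp (∑ i, ((Function.update s j 0) i : ℂ) * a i n) with hc
  set g : ℂ → ℂ := fun t => ∑ n, c n * Complex.exp (t * a j n) with hg
  have hsplit : ∀ (t : ℕ) (n : β), ∑ i, ((Function.update s j t i : ℕ) : ℂ) * a i n
      = (∑ i, ((Function.update s j 0 i : ℕ) : ℂ) * a i n) + t * a j n := by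
    intro t n
    have : ∀ i, ((Function.update s j t i : ℕ) : ℂ) * a i n =
      ((Function.update s j 0 i : ℕ) : ℂ) * a i n + if i = j then (t : ℂ) * a j n else 0 := by
      intro i
      by_cases h : i = j
      · subst h; simp
      · simp [h]
    rw [sum_congr rfl fun i _ => this i, sum_add_distrib]
    simp
  have hval : ∀ (q t : ℕ), iteratedDeriv q g (t : ℂ) =
      bkPhi p a (Function.update s j t) (a j ^ q * (m.map a).prod) := by
    intro q t
    rw [hg, bk_iter_exp, bkPhi_apply]
    refine sum_congr rfl fun n _ => ?_
    rw [hsplit, Complex.exp_add, hc]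
    simp only [Pi.mul_apply, Pi.pow_apply]
    ring
  have hgd : Differentiable ℂ g := by rw [hg]; fun_prop
  have := bk_schwarz g hgd k S R
    (Fintype.card β * (Pm * W ^ N * Real.exp (Fintype.card I * S * W + R * W))) hS hR ?_ ?_ (s j) (hs j)
  · rw [hval, Function.update_eq_self, ← hprod] at this
    exact this
  · intro t ht q hq
    rw [hval]
    have := hz (Function.update s j t) ?_ (List.replicate q j ++ m) (by simp; omega)
    · simpa using this
    · intro i
      by_cases h : i = j
      · subst h; simpa using ht
      · simpa [h] using hs i
  · intro t ht
    rw [hg]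
    have : ∀ n ∈ (univ : Finset β), ‖c n * Complex.exp (t * a j n)‖ ≤
        Pm * W ^ N * Real.exp (Fintype.card I * S * W + R * W) := by
      intro n _
      rw [hc]
      simp only [norm_mul]
      have hR0 : 0 ≤ R := ht ▸ norm_nonneg t
      have e1 : ‖Complex.exp (∑ i, ((Function.update s j 0) i : ℂ) * a i n)‖ ≤
          Real.exp (Fintype.card I * S * W) := by
        refine (Complex.norm_exp_le_exp_norm _).trans (Real.exp_le_exp.2 ?_)
        calc _ ≤ ∑ i : I, (S : ℝ) * W := by
              refine norm_sum_le_of_le _ fun i _ => ?_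
              rw [norm_mul, Complex.norm_natCast]
              refine mul_le_mul ?_ (ha i n) (norm_nonneg _) (by positivity)
              by_cases h : i = j
              · subst h; simp
              · simpa [h] using (hs i).le
          _ = _ := by simp; ring
      have e2 : ‖Complex.exp (t * a j n)‖ ≤ Real.exp (R * W) := by
        refine (Complex.norm_exp_le_exp_norm _).trans (Real.exp_le_exp.2 ?_)
        rw [norm_mul, ht]
        exact mul_le_mul_of_nonneg_left (ha j n) hR0
      have e3 : ‖(m.map a).prod n‖ ≤ W ^ N :=
        (bk_list_bound a W (by linarith) ha m n).trans (pow_le_pow_right₀ hW (by omega))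
      rw [Real.exp_add, ← mul_assoc]
      gcongr
      exact hp n
    refine (norm_sum_le_of_le _ this).trans ?_
    simp


lemma bk_siegel.{u} (K : Type u) [Field K] [NumberField K] : ∃ C : ℝ, 1 ≤ C ∧
    ∀ (α : Type u) (β : Type) [Fintype α] [Fintype β] (a : Matrix α β (𝓞 K)) (A : ℝ), 1 ≤ A →
    (∀ k l, house (a k l : K) ≤ A) → 0 < Fintype.card α →
    2 * Fintype.card α ≤ Fintype.card β →
    ∃ ξ : β → 𝓞 K, ξ ≠ 0 ∧ a.mulVec ξ = 0 ∧
      ∀ l, house (ξ l : K) ≤ C * (C * Fintype.card β * A) := by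
  classical
  have key : ∃ c : ℝ, ∀ (α : Type u) (β : Type) [Fintype α] [Fintype β] (a : Matrix α β (𝓞 K)) (A : ℝ), a ≠ 0 →
      (∀ k l, house (a k l : K) ≤ A) → 0 < Fintype.card α → Fintype.card α < Fintype.card β →
      ∃ ξ : β → 𝓞 K, ξ ≠ 0 ∧ a.mulVec ξ = 0 ∧ ∀ l, house (ξ l).1 ≤
        c * ((c * (Fintype.card β : ℕ) * A) ^ (((Fintype.card α : ℕ) : ℝ) / ((Fintype.card β : ℕ) - (Fintype.card α : ℕ)))) := by
    exact ⟨_, fun α β _ _ a A ha0 ha h0 h1 =>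
      house.exists_ne_zero_int_vec_house_le K a ha0 h0 h1 rfl ha rfl⟩
  obtain ⟨c, hc⟩ := key
  refine ⟨max 1 |c|, le_max_left _ _, fun α β _ _ a A hA ha h0 h1 => ?_⟩
  set C := max 1 |c| with hCdef
  have hC1 : 1 ≤ C := le_max_left _ _
  have hcC : |c| ≤ C := le_max_right _ _
  have hβ : (1 : ℝ) ≤ Fintype.card β := by
    have : 1 ≤ Fintype.card β := by omega
    exact_mod_cast this
  have hbig : 1 ≤ C * Fintype.card β * A := one_le_mul_of_one_le_of_one_le
    (one_le_mul_of_one_le_of_one_le hC1 hβ) hA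
  by_cases ha0 : a = 0
  · have : Nonempty β := Fintype.card_pos_iff.1 (by omega)
    refine ⟨1, one_ne_zero, by simp [ha0], fun l => ?_⟩
    have : house ((1 : 𝓞 K) : K) = 1 := by
      have := house_intCast (K := K) 1
      simpa using this
    simp only [Pi.one_apply]
    rw [this]
    exact one_le_mul_of_one_le_of_one_le hC1 hbig
  · obtain ⟨ξ, h2, h3, h4⟩ := hc α β a A ha0 ha h0 (by omega)
    refine ⟨ξ, h2, h3, fun l => (h4 l).trans ?_⟩
    set e := (((Fintype.card α : ℕ) : ℝ) / ((Fintype.card β : ℕ) - (Fintype.card α : ℕ)))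
    have h1' : 2 * (Fintype.card α : ℝ) ≤ Fintype.card β := by exact_mod_cast h1
    have h0' : (0 : ℝ) < Fintype.card α := by exact_mod_cast h0
    have he0 : 0 ≤ e := by
      refine div_nonneg h0'.le ?_; linarith
    have he1 : e ≤ 1 := by
      refine div_le_one_of_le₀ ?_ ?_ <;> linarith
    calc _ ≤ |c| * |(c * (Fintype.card β : ℕ) * A) ^ e| := by
          rw [← abs_mul]; exact le_abs_self _
      _ ≤ C * (|c * (Fintype.card β : ℕ) * A| ^ e) := by
          refine mul_le_mul hcC (Real.abs_rpow_le_abs_rpow _ _) (abs_nonneg _) (by linarith)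
      _ ≤ C * ((C * Fintype.card β * A) ^ e) := by
          refine mul_le_mul_of_nonneg_left ?_ (by linarith)
          refine Real.rpow_le_rpow (abs_nonneg _) ?_ he0
          rw [abs_mul, abs_mul, Nat.abs_cast, abs_of_nonneg (by linarith : (0 : ℝ) ≤ A)]
          gcongr
      _ ≤ C * ((C * Fintype.card β * A) ^ (1 : ℝ)) := by
          refine mul_le_mul_of_nonneg_left ?_ (by linarith)
          exact Real.rpow_le_rpow_of_exponent_le hbig he1
      _ = _ := by rw [Real.rpow_one]

lemma bk_vander {β : Type*} [Fintype β] (p v : β → ℂ) (hv : Function.Injective v)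
    (h : ∀ k : ℕ, ∑ n, p n * v n ^ k = 0) : p = 0 := by
  classical
  have hpoly : ∀ Q : Polynomial ℂ, ∑ n, p n * Q.eval (v n) = 0 := by
    intro Q
    induction Q using Polynomial.induction_on' with
    | add P Q h1 h2 => simp only [Polynomial.eval_add, mul_add, sum_add_distrib, h1, h2, add_zero]
    | monomial k a =>
      simp only [Polynomial.eval_monomial]
      calc _ = a * ∑ n, p n * v n ^ k := by
            rw [mul_sum]; exact sum_congr rfl fun n _ => by ring
        _ = 0 := by rw [h]; simp
  ext n
  have := hpoly (∏ m ∈ univ.erase n, (Polynomial.X - Polynomial.C (v m)))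
  simp only [Polynomial.eval_prod, Polynomial.eval_sub, Polynomial.eval_X, Polynomial.eval_C] at this
  rw [sum_eq_single n] at this
  · rcases mul_eq_zero.1 this with h | h
    · simpa using h
    · rw [prod_eq_zero_iff] at h
      obtain ⟨m, hm, h⟩ := h
      exact absurd (hv (sub_eq_zero.1 h)).symm (ne_of_mem_erase hm)
  · intro m _ hm
    rw [prod_eq_zero (i := m) (by simp [hm]) (by simp)]; simp
  · simp

open scoped Classical in
lemma bk_inverse {K : Type*} [Field K] [NumberField K] (φ : K →+* ℂ)
    {I : Type*} [Fintype I] (b : Module.Basis I ℤ (𝓞 K)) (g : K ≃ₐ[ℚ] K) :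
    ∃ v : I → ℂ, ∀ h : K ≃ₐ[ℚ] K, ∑ j, v j * φ (h (b j : K)) = if g = h then 1 else 0 := by
  classical
  let B : I → (K ≃ₐ[ℚ] K) → ℂ := fun j h => φ (h (b j : K))
  have htop : Submodule.span ℂ (Set.range B) = ⊤ := by
    by_contra hne
    obtain ⟨f, hf0, hf⟩ := Submodule.exists_le_ker_of_lt_top _ (lt_top_iff_ne_top.2 hne)
    apply hf0
    let c : (K ≃ₐ[ℚ] K) → ℂ := fun h => f (Pi.single h 1)
    have hfc : ∀ w, f w = ∑ h, c h * w h := by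
      intro w
      conv_lhs => rw [← Finset.univ_sum_single w]
      rw [map_sum]
      refine sum_congr rfl fun h _ => ?_
      have : (Pi.single h (w h) : (K ≃ₐ[ℚ] K) → ℂ) = w h • Pi.single h 1 := by
        rw [← Pi.single_smul]; simp
      rw [this, map_smul, smul_eq_mul, mul_comm]
    have h1 : ∀ j, ∑ h, c h * φ (h (b j : K)) = 0 := by
      intro j
      rw [← hfc (B j)]
      exact hf (Submodule.subset_span ⟨j, rfl⟩)
    let ψ : (K ≃ₐ[ℚ] K) → (𝓞 K →* ℂ) := fun h =>
      ((φ.comp (h : K →+* K)).comp (algebraMap (𝓞 K) K) : 𝓞 K →+* ℂ)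
    have hψ : Function.Injective ψ := by
      intro h h' e
      have e1 : ∀ x : 𝓞 K, h (x : K) = h' (x : K) := fun x => φ.injective (DFunLike.congr_fun e x)
      ext y
      obtain ⟨x, n, hn, rfl⟩ := IsFractionRing.div_surjective (A := 𝓞 K) y
      rw [map_div₀, map_div₀]
      congr 1
      · exact e1 x
      · exact e1 n
    have h2 : ∀ x : 𝓞 K, ∑ h, c h * ψ h x = 0 := by
      intro x
      have hx := b.sum_repr x
      have : ∀ h : K ≃ₐ[ℚ] K, ψ h x = ∑ j, ((b.repr x j : ℤ) : ℂ) * φ (h (b j : K)) := by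
        intro h
        change φ (h ((x : 𝓞 K) : K)) = _
        conv_lhs => rw [← hx]
        simp
      simp only [this, mul_sum]
      rw [sum_comm]
      refine sum_eq_zero fun j _ => ?_
      calc _ = ((b.repr x j : ℤ) : ℂ) * ∑ h, c h * φ (h (b j : K)) := by
            rw [mul_sum]; exact sum_congr rfl fun _ _ => by ring
        _ = 0 := by rw [h1]; simp
    have hli := (linearIndependent_monoidHom (𝓞 K) ℂ).comp ψ hψ
    rw [Fintype.linearIndependent_iff] at hli
    have h3 := hli c (by ext x; simpa using h2 x)
    ext w
    simp [c] at h3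
    simp [h3]
  have hm : (Pi.single g 1 : (K ≃ₐ[ℚ] K) → ℂ) ∈ Submodule.span ℂ (Set.range B) := by
    rw [htop]; trivial
  obtain ⟨v, hv⟩ := (Submodule.mem_span_range_iff_exists_fun ℂ).1 hm
  refine ⟨v, fun h => ?_⟩
  have := congrFun hv h
  simp only [Finset.sum_apply, Pi.smul_apply, smul_eq_mul, B] at this
  rw [this, Pi.single_apply]
  simp [eq_comm]

lemma bk_house_one {K : Type*} [Field K] [NumberField K] : house (1 : K) = 1 := by
  simpa using house_intCast (K := K) 1

lemma bk_house_prod {K : Type*} [Field K] [NumberField K] {ι : Type*} (s : Finset ι) (f : ι → K) (B : ι → ℝ)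
    (h : ∀ i ∈ s, house (f i) ≤ B i) : house (∏ i ∈ s, f i) ≤ ∏ i ∈ s, B i := by
  classical
  induction s using Finset.induction_on with
  | empty => simp [bk_house_one]
  | insert a s ha ih =>
    rw [prod_insert ha, prod_insert ha]
    refine (house_mul_le _ _).trans ?_
    have h1 := h a (mem_insert_self _ _)
    exact mul_le_mul h1 (ih fun i hi => h i (mem_insert_of_mem hi)) (house_nonneg _)
      ((house_nonneg _).trans h1)

/-- heights of products -/
lemma bk_height {K : Type*} [Field K] [NumberField K] {J : Type*} [Fintype J] (e : J → K) :
    ∃ (D : ℕ) (H : ℝ), 0 < D ∧ 1 ≤ H ∧ (D : ℝ) ≤ H ∧ ∀ (N : ℕ) (c : J → ℕ), (∀ j, c j ≤ N) →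
      IsIntegral ℤ ((D : K) ^ N * ∏ j, e j ^ c j) ∧
      house ((D : K) ^ N * ∏ j, e j ^ c j) ≤ H ^ N := by
  classical
  have h1 : ∀ j, ∃ m : ℕ, 0 < m ∧ IsIntegral ℤ ((m : K) * e j) := by
    intro j
    have halg : IsAlgebraic ℤ (e j) := by
      rw [IsFractionRing.isAlgebraic_iff ℤ ℚ K]; exact Algebra.IsAlgebraic.isAlgebraic _
    obtain ⟨y, hy, hi⟩ := halg.exists_integral_multiple
    refine ⟨y.natAbs, Int.natAbs_pos.2 hy, ?_⟩
    rcases Int.natAbs_eq y with h | h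
    · rw [h] at hi; simpa using hi
    · rw [h] at hi; simpa using hi.neg
  choose m hm hi using h1
  set Dj : ℕ := ∏ j, m j
  have hD0 : 0 < Dj := prod_pos fun j _ => hm j
  have hDi : ∀ j, IsIntegral ℤ ((Dj : K) * e j) := by
    intro j
    have : (Dj : K) * e j = ((∏ i ∈ univ.erase j, m i : ℕ) : K) * ((m j : K) * e j) := by
      rw [← mul_assoc, ← Nat.cast_mul, prod_erase_mul _ _ (mem_univ j)]
    rw [this]
    have hint : IsIntegral ℤ ((∏ i ∈ univ.erase j, m i : ℕ) : K) := by
      simpa using isIntegral_algebraMap (R := ℤ) (A := K) (x := ((∏ i ∈ univ.erase j, m i : ℕ) : ℤ))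
    exact hint.mul (hi j)
  set H0 : ℝ := max Dj (max 1 (∑ j, house ((Dj : K) * e j)))
  have hDr : (1 : ℝ) ≤ Dj := by exact_mod_cast hD0
  have hDH : (Dj : ℝ) ≤ H0 := le_max_left _ _
  have hH1 : 1 ≤ H0 := hDr.trans hDH
  have hHj : ∀ j, house ((Dj : K) * e j) ≤ H0 := fun j =>
    (single_le_sum (f := fun j => house ((Dj : K) * e j)) (fun _ _ => house_nonneg _) (mem_univ j)).trans
      ((le_max_right _ _).trans (le_max_right _ _))
  refine ⟨Dj ^ Fintype.card J, H0 ^ Fintype.card J, by positivity, one_le_pow₀ hH1, ?_, ?_⟩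
  · push_cast; exact pow_le_pow_left₀ (by positivity) hDH _
  · intro N c hc
    have e0 : (((Dj ^ Fintype.card J : ℕ) : K) ^ N * ∏ j, e j ^ c j)
        = ∏ j, ((Dj : K) ^ (N - c j) * ((Dj : K) * e j) ^ c j) := by
      have : ∀ j, ((Dj : K) ^ (N - c j) * ((Dj : K) * e j) ^ c j) = (Dj : K) ^ N * e j ^ c j := by
        intro j
        rw [mul_pow, ← mul_assoc, ← pow_add, Nat.sub_add_cancel (hc j)]
      simp only [this, prod_mul_distrib, prod_const, card_univ]
      push_cast
      ring
    rw [e0]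
    have hDint : IsIntegral ℤ (Dj : K) := by
      simpa using isIntegral_algebraMap (R := ℤ) (A := K) (x := (Dj : ℤ))
    refine ⟨IsIntegral.prod _ fun j _ => (hDint.pow _).mul ((hDi j).pow _), ?_⟩
    refine (bk_house_prod _ _ (fun _ => H0 ^ N) fun j _ => ?_).trans ?_
    · have hD : house (Dj : K) = Dj := by simpa using house_intCast (K := K) (Dj : ℤ)
      calc _ ≤ house ((Dj : K) ^ (N - c j)) * house (((Dj : K) * e j) ^ c j) := house_mul_le _ _
        _ ≤ H0 ^ (N - c j) * H0 ^ c j := by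
          refine mul_le_mul ((house_pow_le _ _).trans ?_) ((house_pow_le _ _).trans ?_)
            (house_nonneg _) (by positivity)
          · rw [hD]; exact pow_le_pow_left₀ (by positivity) hDH _
          · exact pow_le_pow_left₀ (house_nonneg _) (hHj j) _
        _ = H0 ^ N := by rw [← pow_add, Nat.sub_add_cancel (hc j)]
    · simp only [prod_const, card_univ]
      rw [← pow_mul, ← pow_mul, mul_comm]


lemma bk_numeric_rho (d S' μ N k : ℕ) (hd : 1 ≤ d) (S : ℕ) (hS : S = 2 * d ^ 2 * S') 
    (hμ : (4 * S ^ 2) ^ 2 ≤ μ) (hN : μ ^ d ≤ N) (hN1 : 1 ≤ N) (hS1 : 1 ≤ S)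
    (hk : N ≤ d * k) (r : ℝ) (hr : r = 2 * S * (2 * S * μ ^ (d - 1) : ℕ) / N) :
    r ≤ 1 ∧ r ^ (k * S) * ((N : ℝ) ^ N) ^ S' ≤ 1 := by
  have hNr : (1 : ℝ) ≤ N := by exact_mod_cast hN1
  have hr0 : 0 ≤ r := by rw [hr]; positivity
  have h4 : 4 * S ^ 2 ≤ μ := le_trans (Nat.le_self_pow (by norm_num) _) hμ
  have hdd : μ ^ (d - 1) * μ = μ ^ d := by rw [← pow_succ, Nat.sub_add_cancel hd]
  have hr1 : r ≤ 1 := by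
    rw [hr]
    refine div_le_one_of_le₀ ?_ (by positivity)
    have : 2 * S * (2 * S * μ ^ (d - 1)) ≤ N := by
      calc 2 * S * (2 * S * μ ^ (d - 1)) = μ ^ (d - 1) * (4 * S ^ 2) := by ring
        _ ≤ μ ^ (d - 1) * μ := by gcongr
        _ ≤ N := by rw [hdd]; exact hN
    exact_mod_cast this
  refine ⟨hr1, ?_⟩
  have h2d : r ^ (2 * d) * N ≤ 1 := by
    have : (2 * S * (2 * S * μ ^ (d - 1))) ^ (2 * d) * N ≤ N ^ (2 * d) := by
      calc (2 * S * (2 * S * μ ^ (d - 1))) ^ (2 * d) * N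
          = ((4 * S ^ 2) ^ 2) ^ d * (μ ^ (d - 1)) ^ (2 * d) * N := by
            rw [← pow_mul, show 2 * S * (2 * S * μ ^ (d - 1)) = (4 * S ^ 2) * μ ^ (d - 1) by ring, mul_pow]
        _ ≤ μ ^ d * (μ ^ (d - 1)) ^ (2 * d) * N := by gcongr
        _ = (μ ^ d) ^ (2 * d - 1) * N := by
            congr 1
            rw [← pow_mul, ← pow_mul, ← pow_add]
            congr 1
            obtain ⟨e, rfl⟩ : ∃ e, d = e + 1 := ⟨d - 1, by omega⟩
            rw [show 2 * (e + 1) - 1 = 2 * e + 1 by omega]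
            simp only [Nat.add_sub_cancel]; ring
        _ ≤ N ^ (2 * d - 1) * N := by gcongr
        _ = N ^ (2 * d) := by rw [← pow_succ]; congr 1; omega
    rw [hr, div_pow, div_mul_eq_mul_div]
    refine div_le_one_of_le₀ ?_ (by positivity)
    exact_mod_cast this
  calc r ^ (k * S) * ((N : ℝ) ^ N) ^ S' ≤ r ^ (2 * d * (S' * N)) * ((N : ℝ) ^ N) ^ S' := by
        refine mul_le_mul_of_nonneg_right (pow_le_pow_of_le_one hr0 hr1 ?_) (by positivity)
        rw [hS]
        calc 2 * d * (S' * N) ≤ 2 * d * (S' * (d * k)) := by gcongr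
          _ = k * (2 * d ^ 2 * S') := by ring
    _ = (r ^ (2 * d) * N) ^ (S' * N) := by rw [mul_pow, ← pow_mul, ← pow_mul, mul_comm N S']
    _ ≤ 1 := pow_le_one₀ (by positivity) h2d

set_option maxHeartbeats 1000000 in
lemma bk_numeric (d : ℕ) (hd : 1 ≤ d) (Cs H C1 C2 : ℝ) (hCs : 1 ≤ Cs) (hH : 1 ≤ H) (hC1 : 1 ≤ C1)
    (hC2 : 1 ≤ C2) : ∃ S μ : ℕ, 0 < S ∧ 0 < μ ∧ ∀ (M L : ℕ), M = μ ^ d → L = 2 * S * μ ^ (d - 1) →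
      ∀ (Pm : ℝ), Pm = Cs * (Cs * L ^ d * (H ^ (S * L) * (C1 * L) ^ (d * M))) →
      ∀ N k : ℕ, M ≤ N → k ≤ N → N ≤ d * k → 2 * (S : ℝ) ≤ (N : ℝ) / L ∧
      (H ^ (S * L) * (C2 ^ N * (k.factorial * (2 * S / ((N : ℝ) / L)) ^ (k * S) *
        (L ^ d * (Pm * (C1 * L) ^ N * Real.exp (d * S * (C1 * L) + (N : ℝ) / L * (C1 * L)))))))
        * (L ^ d * (Pm * (C1 * L) ^ N * H ^ (S * L))) ^ (d - 1) < 1 := by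
  obtain ⟨S', hS'⟩ : ∃ S', S' = d * (2 * d + 12) + 1 := ⟨_, rfl⟩
  obtain ⟨S, hS⟩ : ∃ S, S = 2 * d ^ 2 * S' := ⟨_, rfl⟩
  have hS1 : 1 ≤ S := by rw [hS, hS']; exact Nat.one_le_iff_ne_zero.2 (by positivity)
  obtain ⟨μ0, hμ0⟩ := exists_nat_ge (Cs + H + C1 + C2 + Real.exp (d * C1))
  obtain ⟨μ, hμ⟩ : ∃ μ, μ = μ0 + (4 * S ^ 2) ^ 2 + d + 2 := ⟨_, rfl⟩
  refine ⟨S, μ, hS1, by omega, ?_⟩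
  intro M L hM hL Pm hPm N k hMN hkN hNk
  have hexp := Real.exp_pos (d * C1)
  have hμN : μ ≤ N := le_trans (Nat.le_self_pow (by omega) _) (hM ▸ hMN)
  have hμNr : (μ : ℝ) ≤ N := by exact_mod_cast hμN
  have hμ0r : (μ0 : ℝ) ≤ N := by
    have : μ0 ≤ N := by omega
    exact_mod_cast this
  have hN2 : 2 ≤ N := by omega
  have hN2r : (2 : ℝ) ≤ N := by exact_mod_cast hN2
  have hdN : d ≤ N := by omega
  have h4 : 4 * S ^ 2 ≤ μ := le_trans (Nat.le_self_pow (n := 2) (by norm_num) (4 * S ^ 2)) (by omega)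
  have hdd : μ ^ (d - 1) * μ = μ ^ d := by rw [← pow_succ, Nat.sub_add_cancel hd]
  have h2SL : 2 * S * L ≤ N := by
    calc 2 * S * L = μ ^ (d - 1) * (4 * S ^ 2) := by rw [hL]; ring
      _ ≤ μ ^ (d - 1) * μ := by gcongr
      _ ≤ N := by rw [hdd, ← hM]; exact hMN
  have hL0 : 0 < L := by
    rw [hL]; have : 0 < μ := by omega
    positivity
  have hSLN : S * L ≤ N := by nlinarith
  have hLN : L ≤ N := by nlinarith
  have hLr : (L : ℝ) ≤ N := by exact_mod_cast hLN
  have hL1 : (1 : ℝ) ≤ L := by exact_mod_cast hL0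
  have hNL : (N : ℝ) / L * L = N := by field_simp
  obtain ⟨Q, hQ⟩ : ∃ Q : ℝ, Q = (N : ℝ) ^ N := ⟨_, rfl⟩
  have hQ1 : 1 < Q := hQ ▸ one_lt_pow₀ (by linarith) (by omega)
  have hQ0 : 0 < Q := by linarith
  have hNQ : (N : ℝ) ≤ Q := hQ ▸ le_self_pow₀ (by linarith) (by omega)
  have hrho := bk_numeric_rho d S' μ N k hd S hS (by omega) (hM ▸ hMN) (by omega) hS1 hNk
    (2 * S / ((N : ℝ) / L)) (by rw [← hL]; field_simp)
  rw [← hQ] at hrho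
  obtain ⟨hr1, hr2⟩ := hrho
  obtain ⟨r, hr⟩ : ∃ r : ℝ, r = 2 * S / ((N : ℝ) / L) := ⟨_, rfl⟩
  rw [← hr] at hr1 hr2 ⊢
  have hr00 : 0 < r := by
    have : (0 : ℝ) < S := by exact_mod_cast hS1
    rw [hr]; positivity
  have hr0 : 0 ≤ r := hr00.le
  refine ⟨?_, ?_⟩
  · rw [le_div_iff₀ (by linarith)]; exact_mod_cast h2SL
  have b1 : H ^ (S * L) ≤ Q := by
    calc H ^ (S * L) ≤ H ^ N := pow_le_pow_right₀ hH hSLN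
      _ ≤ Q := hQ ▸ pow_le_pow_left₀ (by linarith) (by linarith) _
  have b2 : C2 ^ N ≤ Q := hQ ▸ pow_le_pow_left₀ (by linarith) (by linarith) _
  have b3 : (k.factorial : ℝ) ≤ Q := by
    have : k.factorial ≤ N ^ N := (Nat.factorial_le hkN).trans (Nat.factorial_le_pow N)
    rw [hQ]; exact_mod_cast this
  have b4 : (L : ℝ) ^ d ≤ Q := by
    calc (L : ℝ) ^ d ≤ (N : ℝ) ^ d := pow_le_pow_left₀ (by linarith) hLr _
      _ ≤ Q := hQ ▸ pow_le_pow_right₀ (by linarith) hdN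
  have hC1L : C1 * L ≤ N ^ 2 := by
    rw [pow_two]
    exact mul_le_mul (by linarith) hLr (by linarith) (by linarith)
  have b5 : (C1 * L) ^ N ≤ Q ^ 2 := by
    calc (C1 * L) ^ N ≤ ((N : ℝ) ^ 2) ^ N := pow_le_pow_left₀ (by positivity) hC1L _
      _ = Q ^ 2 := by rw [hQ, ← pow_mul, ← pow_mul, mul_comm]
  have b6 : (C1 * L) ^ (d * M) ≤ Q ^ (2 * d) := by
    have h1C : 1 ≤ C1 * L := one_le_mul_of_one_le_of_one_le hC1 hL1
    calc (C1 * L) ^ (d * M) ≤ (C1 * L) ^ (N * d) := pow_le_pow_right₀ h1C (by nlinarith)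
      _ = ((C1 * L) ^ N) ^ d := by rw [pow_mul]
      _ ≤ (Q ^ 2) ^ d := pow_le_pow_left₀ (by positivity) b5 _
      _ = _ := by rw [← pow_mul]
  have b7 : Real.exp (d * S * (C1 * L) + (N : ℝ) / L * (C1 * L)) ≤ Q ^ 2 := by
    have e1 : (d : ℝ) * S * (C1 * L) ≤ N * (d * C1) := by
      have : (S : ℝ) * L ≤ N := by exact_mod_cast hSLN
      calc (d : ℝ) * S * (C1 * L) = (S * L) * (d * C1) := by ring
        _ ≤ _ := by gcongr
    have e2 : (N : ℝ) / L * (C1 * L) ≤ N * (d * C1) := by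
      have : (1 : ℝ) ≤ d := by exact_mod_cast hd
      calc (N : ℝ) / L * (C1 * L) = N * (1 * C1) := by field_simp
        _ ≤ _ := by gcongr
    have e3 : Real.exp (N * (d * C1)) ≤ Q := by
      rw [Real.exp_nat_mul]
      rw [hQ]; exact pow_le_pow_left₀ hexp.le (by linarith) _
    calc _ ≤ Real.exp (N * (d * C1) + N * (d * C1)) := Real.exp_le_exp.2 (by linarith)
      _ ≤ Q * Q := by
        rw [Real.exp_add]; exact mul_le_mul e3 e3 (Real.exp_pos _).le hQ0.le
      _ = Q ^ 2 := by ring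
  have hCsQ : Cs ≤ Q := by linarith
  have hP0 : 0 ≤ Pm := by rw [hPm]; positivity
  have bP : Pm ≤ Q ^ (2 * d + 4) := by
    rw [hPm]
    calc _ ≤ Q * (Q * Q * (Q * Q ^ (2 * d))) := by gcongr
      _ = _ := by ring
  have bh : (L : ℝ) ^ d * (Pm * (C1 * L) ^ N * H ^ (S * L)) ≤ Q ^ (2 * d + 8) := by
    calc _ ≤ Q * (Q ^ (2 * d + 4) * Q ^ 2 * Q) := by gcongr
      _ = _ := by ring
  have bm : (H ^ (S * L) * (C2 ^ N * (k.factorial * r ^ (k * S) *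
        (L ^ d * (Pm * (C1 * L) ^ N * Real.exp (d * S * (C1 * L) + (N : ℝ) / L * (C1 * L)))))))
        ≤ r ^ (k * S) * Q ^ (2 * d + 12) := by
    calc _ ≤ Q * (Q * (Q * r ^ (k * S) * (Q * (Q ^ (2 * d + 4) * Q ^ 2 * Q ^ 2)))) := by gcongr
      _ = _ := by ring
  calc _ ≤ (r ^ (k * S) * Q ^ (2 * d + 12)) * (Q ^ (2 * d + 8)) ^ (d - 1) := by
        gcongr
    _ = r ^ (k * S) * Q ^ (2 * d + 12 + (2 * d + 8) * (d - 1)) := by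
        rw [← pow_mul Q (2 * d + 8) (d - 1), mul_assoc, ← pow_add]
    _ < r ^ (k * S) * Q ^ S' := by
        refine mul_lt_mul_of_pos_left (pow_lt_pow_right₀ hQ1 ?_) (by positivity)
        obtain ⟨e, rfl⟩ : ∃ e, d = e + 1 := ⟨d - 1, by omega⟩
        rw [hS']; simp only [Nat.add_sub_cancel]; nlinarith
    _ ≤ 1 := hr2


lemma bk_listprod {β κ R : Type*} [CommMonoid R] (f : κ → β → R) (l : List κ) (n : β) :
    (l.map f).prod n = (l.map (fun g => f g n)).prod := by
  induction l with
  | nil => simp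
  | cons a l ih => simp [ih]

lemma bk_house_list {K : Type*} [Field K] [NumberField K] {κ : Type*} (f : κ → K) (B : ℝ) (hB : 0 ≤ B)
    (h : ∀ g, house (f g) ≤ B) (l : List κ) : house ((l.map f).prod) ≤ B ^ l.length := by
  induction l with
  | nil => simp [bk_house_one]
  | cons a l ih =>
    simp only [List.map_cons, List.prod_cons, List.length_cons, pow_succ']
    exact (house_mul_le _ _).trans (mul_le_mul (h a) ih (house_nonneg _) hB)

lemma bk_small {K : Type*} [Field K] [NumberField K] (φ : K →+* ℂ) (ξ : K) (hξ : IsIntegral ℤ ξ)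
    (a b : ℝ) (h1 : ‖φ ξ‖ ≤ a) (h2 : house ξ ≤ b)
    (hab : a * b ^ (Module.finrank ℚ K - 1) < 1) : ξ = 0 := by
  have h := norm_norm_le_norm_mul_house_pow ξ φ
  have h0 : 0 ≤ a := (norm_nonneg _).trans h1
  have h3 : ‖Algebra.norm ℚ ξ‖ < 1 := by
    refine h.trans_lt (lt_of_le_of_lt ?_ hab)
    gcongr
    · exact pow_nonneg (house_nonneg ξ) _
    · exact house_nonneg ξ
  have h4 : IsIntegral ℤ (Algebra.norm ℚ ξ) := Algebra.isIntegral_norm ℚ hξ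
  obtain ⟨z, hz⟩ := IsIntegrallyClosed.isIntegral_iff.1 h4
  rw [← hz] at h3
  have h5 : z = 0 := by
    have : |(z : ℝ)| < 1 := by
      have : ‖((z : ℤ) : ℚ)‖ = |(z : ℝ)| := by
        rw [← Rat.norm_cast_real]; simp
      rw [← this]; simpa using h3
    have : |z| < 1 := by exact_mod_cast this
    exact Int.abs_lt_one_iff.1 this
  rw [h5, map_zero] at hz
  exact Algebra.norm_eq_zero_iff.1 hz.symm

set_option maxHeartbeats 400000 in
lemma bk_base.{u} (K : Type u) [Field K] [NumberField K] (Cs H C1 : ℝ) {d S M L : ℕ} (hH1 : 1 ≤ H)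
    (hW1 : 1 ≤ C1 * L)
    (Pm : ℝ) (hPm : Pm = Cs * (Cs * L ^ d * (H ^ (S * L) * (C1 * L) ^ (d * M))))
    (hCs : ∀ (α : Type u) (β : Type) [Fintype α] [Fintype β] (a : Matrix α β (𝓞 K)) (A : ℝ), 1 ≤ A →
      (∀ k l, house (a k l : K) ≤ A) → 0 < Fintype.card α →
      2 * Fintype.card α ≤ Fintype.card β →
      ∃ ξ : β → 𝓞 K, ξ ≠ 0 ∧ a.mulVec ξ = 0 ∧
        ∀ l, house (ξ l : K) ≤ Cs * (Cs * Fintype.card β * A))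
    (hL0 : 0 < L) (hM0 : 0 < M) (hS0 : 0 < S) (hd1 : 1 ≤ d) {κ : Type u} [Fintype κ] [DecidableEq κ]
    (hcardκ : Fintype.card κ ≤ d - 1) (hSML : 2 ^ d * S ^ d * M ^ (d - 1) = L ^ d)
    (G : κ → (Fin d → Fin L) → K) (hGi : ∀ g n, IsIntegral ℤ (G g n))
    (hGh : ∀ g n, house (G g n) ≤ C1 * L) (y : (Fin d → ℕ) → (Fin d → Fin L) → K)
    (hyp : ∀ s : Fin d → ℕ, (∀ i, s i < S) → ∀ n, IsIntegral ℤ (y s n) ∧ house (y s n) ≤ H ^ (S * L)) :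
    ∃ p : (Fin d → Fin L) → 𝓞 K, p ≠ 0 ∧ (∀ n, house (p n : K) ≤ Pm) ∧
      ∀ s : Fin d → ℕ, (∀ i, s i < S) → ∀ l : List κ, l.length < M →
        ∑ n, (p n : K) * (l.map fun g => G g n).prod * y s n = 0 := by
  have hent : ∀ (t : (Fin d → Fin S) × (κ → Fin M)) (n : Fin d → Fin L),
      IsIntegral ℤ ((∏ g : κ, (G g n) ^ (t.2 g : ℕ)) * y (fun i => t.1 i) n) := fun t n =>
    (IsIntegral.prod _ fun g _ => (hGi g n).pow _).mul (hyp _ (fun i => (t.1 i).2) n).1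
  have hA1 : ∀ (t : (Fin d → Fin S) × (κ → Fin M)) (n : Fin d → Fin L),
      house ((∏ g : κ, (G g n) ^ (t.2 g : ℕ)) * y (fun i => t.1 i) n) ≤ H ^ (S * L) * (C1 * L) ^ (d * M) := by
    intro t n
    rw [mul_comm]
    refine (house_mul_le _ _).trans (mul_le_mul (hyp _ (fun i => (t.1 i).2) n).2 ?_ (house_nonneg _)
      (by positivity))
    calc _ ≤ ∏ g : κ, (C1 * L) ^ M := by
          refine bk_house_prod _ _ _ fun g _ => ?_
          refine (house_pow_le _ _).trans ?_
          exact (pow_le_pow_left₀ (house_nonneg _) (hGh g n) _).trans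
            (pow_le_pow_right₀ hW1 (t.2 g).2.le)
      _ = (C1 * L) ^ (M * Fintype.card κ) := by
          rw [prod_const, ← pow_mul, card_univ]
      _ ≤ (C1 * L) ^ (d * M) := by
          refine pow_le_pow_right₀ hW1 ?_
          rw [mul_comm]
          exact Nat.mul_le_mul_right _ (hcardκ.trans (Nat.sub_le _ _))
  have hA2 : 0 < Fintype.card ((Fin d → Fin S) × (κ → Fin M)) := by
    simp only [Fintype.card_prod, Fintype.card_fun, Fintype.card_fin]
    positivity
  have hA3 : 2 * Fintype.card ((Fin d → Fin S) × (κ → Fin M)) ≤ Fintype.card (Fin d → Fin L) := by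
    simp only [Fintype.card_prod, Fintype.card_fun, Fintype.card_fin]
    calc 2 * (S ^ d * M ^ Fintype.card κ) ≤ 2 ^ d * (S ^ d * M ^ (d - 1)) := by
          gcongr
          exact Nat.le_self_pow (by omega) 2
      _ = L ^ d := by
          rw [← mul_assoc, hSML]
  obtain ⟨p, hp0, hpz, hpb⟩ := hCs ((Fin d → Fin S) × (κ → Fin M)) (Fin d → Fin L)
    (fun t n => ⟨_, hent t n⟩) (H ^ (S * L) * (C1 * L) ^ (d * M))
    (one_le_mul_of_one_le_of_one_le (one_le_pow₀ hH1) (one_le_pow₀ hW1)) hA1 hA2 hA3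
  refine ⟨p, hp0, fun n => ?_, ?_⟩
  · refine (hpb n).trans (le_of_eq ?_)
    rw [hPm]; simp
  · intro s hs l hl
    have hcnt : ∀ g : κ, l.count g < M := fun g => lt_of_le_of_lt List.count_le_length hl
    have h3 := congrFun hpz (fun i => ⟨s i, hs i⟩, fun g => ⟨l.count g, hcnt g⟩)
    have h4 := congrArg (algebraMap (𝓞 K) K) h3
    simp only [Matrix.mulVec, dotProduct, map_sum, Pi.zero_apply, map_zero] at h4
    rw [← h4]
    refine sum_congr rfl fun n _ => ?_
    have h5 : (l.map fun g => G g n).prod = ∏ g : κ, (G g n) ^ (l.count g) := by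
      rw [Finset.prod_list_map_count]
      refine prod_subset (subset_univ _) fun g _ hg => ?_
      rw [List.count_eq_zero_of_not_mem (by simpa using hg), pow_zero]
    rw [h5]
    change _ = ((∏ g : κ, (G g n) ^ (l.count g)) * y s n) * (p n : K)
    ring

set_option maxHeartbeats 400000 in
theorem bk_main {K : Type*} [Field K] [NumberField K] [IsGalois ℚ K] (φ : K →+* ℂ)
    (Λ : (K ≃ₐ[ℚ] K) → ℂ)
    (he : ∀ x : 𝓞 K, ∃ y : K, φ y = Complex.exp (∑ g, Λ g * φ (g (x : K))))
    (h1 : Λ 1 = 0) : ∀ g, Λ g = 0 := by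
  classical
  by_contra hcon
  push Not at hcon
  obtain ⟨g0, hg0⟩ := hcon
  set d := Module.finrank ℚ K with hd
  have hd1 : 1 ≤ d := Module.finrank_pos
  have b : Module.Basis (Fin d) ℤ (𝓞 K) :=
    (Module.finBasis ℤ (𝓞 K)).reindex (finCongr (RingOfIntegers.rank K))
  have : Nonempty (Fin d) := ⟨⟨0, hd1⟩⟩
  set ω : Fin d → K := fun i => (b i : K) with hω
  set A : K → ℂ := fun x => ∑ g, Λ g * φ (g x) with hA
  have hAsum : ∀ (c : Fin d → ℕ) (f : Fin d → K), A (∑ i, (c i : K) * f i) = ∑ i, (c i : ℂ) * A (f i) := by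
    intro c f
    simp only [hA, map_sum, map_mul, map_natCast, mul_sum]
    rw [sum_comm]
    exact sum_congr rfl fun i _ => sum_congr rfl fun g _ => by ring
  have hE : ∀ ij : Fin d × Fin d, ∃ y : K, φ y = Complex.exp (A (ω ij.1 * ω ij.2)) := by
    intro ij
    obtain ⟨y, hy⟩ := he (b ij.1 * b ij.2)
    exact ⟨y, by rw [hy]; simp [hA, hω]⟩
  choose E hE using hE
  obtain ⟨D, H, hD0, hH1, hDH, hDH2⟩ := bk_height E
  set κ := {g : K ≃ₐ[ℚ] K // Λ g ≠ 0} with hκ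
  -- inverse matrix
  have hv : ∀ g : κ, ∃ u : Fin d → ℂ, ∀ x : K, φ (g.1 x) = ∑ j, u j * A (ω j * x) := by
    intro g
    obtain ⟨v, hv⟩ := bk_inverse φ b g.1
    refine ⟨fun j => v j / Λ g.1, fun x => ?_⟩
    have : ∀ j, v j / Λ g.1 * A (ω j * x) = ∑ h, (Λ h / Λ g.1 * φ (h x)) * (v j * φ (h (b j : K))) := by
      intro j
      simp only [hA, hω, map_mul, mul_sum]
      exact sum_congr rfl fun h _ => by ring
    simp only [this]
    rw [sum_comm]
    simp only [← mul_sum, hv]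
    have hg := g.2
    simp [hg]
  choose u hu using hv
  set C1 : ℝ := 1 + ∑ g : K ≃ₐ[ℚ] K, ∑ i, house (g (ω i)) + ∑ j, ∑ i, ‖A (ω j * ω i)‖ with hC1
  set C2 : ℝ := 1 + ∑ g : κ, ∑ j, ‖u g j‖ with hC2
  have hn1 : 0 ≤ ∑ g : K ≃ₐ[ℚ] K, ∑ i, house (g (ω i)) :=
    sum_nonneg fun _ _ => sum_nonneg fun _ _ => house_nonneg _
  have hn2 : 0 ≤ ∑ j, ∑ i, ‖A (ω j * ω i)‖ := by positivity
  have hn3 : 0 ≤ ∑ g : κ, ∑ j, ‖u g j‖ := by positivity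
  have hC11 : 1 ≤ C1 := by linarith
  have hC21 : 1 ≤ C2 := by linarith
  obtain ⟨Cs, hCs1, hCs⟩ := bk_siegel K
  obtain ⟨S, μ, hS0, hμ0, hnum⟩ := bk_numeric d hd1 Cs H C1 C2 hCs1 hH1 hC11 hC21
  obtain ⟨M, hM⟩ : ∃ M, M = μ ^ d := ⟨_, rfl⟩
  obtain ⟨L, hL⟩ : ∃ L, L = 2 * S * μ ^ (d - 1) := ⟨_, rfl⟩
  obtain ⟨Pm, hPm⟩ : ∃ Pm : ℝ, Pm = Cs * (Cs * L ^ d * (H ^ (S * L) * (C1 * L) ^ (d * M))) := ⟨_, rfl⟩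
  have hnum := hnum M L hM hL Pm hPm
  have hL0 : 0 < L := by rw [hL]; positivity
  have hM0 : 0 < M := by rw [hM]; positivity
  have hL1 : (1 : ℝ) ≤ L := by exact_mod_cast hL0
  have hW1 : 1 ≤ C1 * L := one_le_mul_of_one_le_of_one_le hC11 hL1
  set X : (Fin d → Fin L) → K := fun n => ∑ i, ((n i : ℕ) : K) * ω i with hX
  have hωint : ∀ i, IsIntegral ℤ (ω i) := fun i => (b i).2
  have hnat : ∀ m : ℕ, IsIntegral ℤ (m : K) := fun m => by
    simpa using isIntegral_algebraMap (R := ℤ) (A := K) (x := (m : ℤ))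
  have hXint : ∀ n, IsIntegral ℤ (X n) := fun n =>
    IsIntegral.sum _ fun i _ => (hnat _).mul (hωint i)
  have hgint : ∀ (g : K ≃ₐ[ℚ] K) n, IsIntegral ℤ (g (X n)) := fun g n =>
    (hXint n).map (g.toAlgHom.restrictScalars ℤ)
  have hXinj : Function.Injective X := by
    intro n n' h
    have h2 : ∑ i, ((n i : ℕ) : ℤ) • b i = ∑ i, ((n' i : ℕ) : ℤ) • b i := by
      apply RingOfIntegers.coe_injective
      simpa [hX, hω] using h
    have h3 := congrArg b.repr h2
    ext i
    have h4 := DFunLike.congr_fun h3 i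
    simp only [b.repr_sum_self] at h4
    exact_mod_cast h4
  have hnL : ∀ (n : Fin d → Fin L) i, ((n i : ℕ) : ℝ) ≤ L := fun n i => by exact_mod_cast (n i).2.le
  have hgX : ∀ (g : K ≃ₐ[ℚ] K) n, house (g (X n)) ≤ C1 * L := by
    intro g n
    calc house (g (X n)) ≤ ∑ i, house (g (ω i)) * L := by
          rw [hX]; simp only [map_sum, map_mul, map_natCast]
          refine (house_sum_le_sum_house _ _).trans (sum_le_sum fun i _ => ?_)
          rw [house_nat_mul, mul_comm]
          exact mul_le_mul_of_nonneg_left (hnL n i) (house_nonneg _)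
      _ = (∑ i, house (g (ω i))) * L := by rw [sum_mul]
      _ ≤ C1 * L := by
          refine mul_le_mul_of_nonneg_right ?_ (by positivity)
          have := single_le_sum (f := fun g : K ≃ₐ[ℚ] K => ∑ i, house (g (ω i)))
            (fun _ _ => sum_nonneg fun _ _ => house_nonneg _) (mem_univ g)
          linarith
  set a : Fin d → (Fin d → Fin L) → ℂ := fun j n => A (ω j * X n) with ha
  have haX : ∀ j n, a j n = ∑ i, ((n i : ℕ) : ℂ) * A (ω j * ω i) := by
    intro j n
    rw [← hAsum (fun i => (n i : ℕ)) (fun i => ω j * ω i)]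
    simp only [ha, hX, mul_sum]
    congr 1
    exact sum_congr rfl fun i _ => by ring
  have haW : ∀ j n, ‖a j n‖ ≤ C1 * L := by
    intro j n
    rw [haX]
    calc _ ≤ ∑ i, ‖A (ω j * ω i)‖ * L := by
          refine norm_sum_le_of_le _ fun i _ => ?_
          rw [norm_mul, Complex.norm_natCast, mul_comm]
          exact mul_le_mul_of_nonneg_left (hnL n i) (norm_nonneg _)
      _ = (∑ i, ‖A (ω j * ω i)‖) * L := by rw [sum_mul]
      _ ≤ C1 * L := by
          refine mul_le_mul_of_nonneg_right ?_ (by positivity)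
          have := single_le_sum (f := fun j => ∑ i, ‖A (ω j * ω i)‖)
            (fun _ _ => by positivity) (mem_univ j)
          linarith
  set bb : κ → (Fin d → Fin L) → ℂ := fun g n => φ (g.1 (X n)) with hbb
  have hbba : ∀ g, bb g = ∑ j, u g j • a j := by
    intro g; ext n
    simp only [hbb, Finset.sum_apply, Pi.smul_apply, smul_eq_mul]
    exact hu g (X n)
  have habb : ∀ j, a j = ∑ g : κ, (Λ g.1 * φ (g.1 (ω j))) • bb g := by
    intro j; ext n
    simp only [hbb, ha, hA, Finset.sum_apply, Pi.smul_apply, smul_eq_mul, map_mul]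
    rw [← Finset.sum_subtype (univ.filter fun g : K ≃ₐ[ℚ] K => Λ g ≠ 0) (by simp)
      (fun g : K ≃ₐ[ℚ] K => Λ g * φ (g (ω j)) * φ (g (X n)))]
    rw [Finset.sum_filter_of_ne]
    · exact sum_congr rfl fun g _ => by ring
    · intro g _ h h0
      exact h (by rw [h0]; ring)
  set y : (Fin d → ℕ) → (Fin d → Fin L) → K := fun s n =>
    (D : K) ^ (S * L) * ∏ ij : Fin d × Fin d, E ij ^ (s ij.1 * (n ij.2 : ℕ)) with hy
  have hyp : ∀ s : Fin d → ℕ, (∀ i, s i < S) → ∀ n, IsIntegral ℤ (y s n) ∧ house (y s n) ≤ H ^ (S * L) :=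
    fun s hs n => hDH2 (S * L) _ fun ij => Nat.mul_le_mul (hs ij.1).le (n ij.2).2.le
  have hyφ : ∀ (s : Fin d → ℕ) n, φ (y s n) = (D : ℂ) ^ (S * L) * Complex.exp (∑ i, (s i : ℂ) * a i n) := by
    intro s n
    simp only [hy, map_mul, map_pow, map_natCast, map_prod, hE]
    congr 1
    simp only [← Complex.exp_nat_mul]
    rw [← Complex.exp_sum]
    congr 1
    rw [Fintype.sum_prod_type]
    refine sum_congr rfl fun i _ => ?_
    rw [haX, mul_sum]
    refine sum_congr rfl fun j _ => ?_
    push_cast; ring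
  obtain ⟨wK, hwK⟩ : ∃ wK : List κ → (Fin d → Fin L) → K,
      wK = fun l n => (l.map (fun g : κ => g.1 (X n))).prod := ⟨_, rfl⟩
  have hwφ : ∀ l n, φ (wK l n) = (l.map bb).prod n := by
    intro l n
    rw [bk_listprod, hwK]
    simp only [map_list_prod, List.map_map]
    rfl
  have hwint : ∀ l n, IsIntegral ℤ (wK l n) := by
    intro l n
    simp only [hwK]
    induction l with
    | nil => simpa using isIntegral_one
    | cons g l ih => simpa using (hgint g.1 n).mul ih
  have hwh : ∀ l n, house (wK l n) ≤ (C1 * L) ^ l.length := fun l n =>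
    hwK ▸ bk_house_list (fun g : κ => g.1 (X n)) (C1 * L) (zero_le_one.trans hW1) (fun g => hgX g.1 n) l
  -- Siegel
  have hbase : ∃ p : (Fin d → Fin L) → 𝓞 K, p ≠ 0 ∧ (∀ n, house (p n : K) ≤ Pm) ∧
      ∀ s : Fin d → ℕ, (∀ i, s i < S) → ∀ l : List κ, l.length < M →
        ∑ n, (p n : K) * wK l n * y s n = 0 := by
    have hcardκ : Fintype.card κ ≤ d - 1 := by
      have h2 : Fintype.card κ < Fintype.card (K ≃ₐ[ℚ] K) :=
        Fintype.card_subtype_lt (x := (1 : K ≃ₐ[ℚ] K)) (by simpa using h1)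
      rw [← Nat.card_eq_fintype_card (α := K ≃ₐ[ℚ] K), IsGalois.card_aut_eq_finrank] at h2
      omega
    subst hwK
    exact bk_base K Cs H C1 hH1 hW1 Pm hPm hCs hL0 hM0 hS0 hd1 hcardκ (by
      rw [hL, hM, mul_pow, mul_pow, ← pow_mul, ← pow_mul, mul_comm d]) (fun g n => g.1 (X n))
      (fun g n => hgint g.1 n) (fun g n => hgX g.1 n) y hyp
  obtain ⟨p, hp0, hpb, hpz⟩ := hbase
  obtain ⟨P, hP⟩ : ∃ P : (Fin d → Fin L) → ℂ, P = fun n => φ (p n : K) := ⟨_, rfl⟩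
  have hkey : ∀ s l, φ (∑ n, (p n : K) * wK l n * y s n) =
      (D : ℂ) ^ (S * L) * bkPhi P a s ((l.map bb).prod) := by
    intro s l
    rw [bkPhi_apply, map_sum, mul_sum]
    refine sum_congr rfl fun n _ => ?_
    rw [map_mul, map_mul, hyφ, hwφ, hP]
    ring
  have hD0' : (D : ℂ) ^ (S * L) ≠ 0 := pow_ne_zero _ (by exact_mod_cast hD0.ne')
  have hzero : ∀ N : ℕ, ∀ s : Fin d → ℕ, (∀ i, s i < S) → ∀ l : List κ, l.length = N →
      bkPhi P a s ((l.map bb).prod) = 0 := by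
    intro N
    induction N using Nat.strong_induction_on with
    | _ N ih =>
    intro s hs l hl
    suffices h : ∑ n, (p n : K) * wK l n * y s n = 0 by
      have h2 := hkey s l
      rw [h, map_zero] at h2
      exact (mul_eq_zero.1 h2.symm).resolve_left hD0'
    rcases lt_or_ge N M with hNM | hNM
    · exact hpz s hs l (hl ▸ hNM)
    have hz : ∀ s : Fin d → ℕ, (∀ i, s i < S) → ∀ l : List (Fin d), l.length < N →
        bkPhi P a s ((l.map a).prod) = 0 := by
      intro s hs l hl
      have h3 := bk_change (bkPhi P a s) bb a _ habb (∑ j, ∑ g : κ, ‖Λ g.1 * φ (g.1 (ω j))‖) 0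
        (fun j => single_le_sum (f := fun j => ∑ g : κ, ‖Λ g.1 * φ (g.1 (ω j))‖)
          (fun _ _ => by positivity) (mem_univ j)) (by positivity) le_rfl l.length
        (fun l' hl' => by rw [ih l.length hl s hs l' hl', norm_zero]) l rfl
      rw [mul_zero] at h3
      exact norm_le_zero_iff.1 h3
    have hne : ((range (N + 1)).filter fun k => N ≤ d * k).Nonempty :=
      ⟨N, by simp; nlinarith⟩
    have hPm0 : 0 ≤ Pm := by rw [hPm]; positivity
    obtain ⟨F, hF⟩ : ∃ F : ℕ → ℝ, F = fun k : ℕ => (k.factorial * (2 * S / ((N : ℝ) / L)) ^ (k * S) *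
        (L ^ d * (Pm * (C1 * L) ^ N * Real.exp (d * S * (C1 * L) + (N : ℝ) / L * (C1 * L))))) := ⟨_, rfl⟩
    obtain ⟨k, hk, hmax⟩ := exists_max_image _ F hne
    rw [mem_filter, mem_range] at hk
    obtain ⟨hR, hlt⟩ := hnum N k hNM (by omega) hk.2
    have hPb : ∀ n, ‖P n‖ ≤ Pm := fun n => by
      rw [hP]; exact (norm_embedding_le_house _ φ).trans (hpb n)
    have hB : ∀ l : List (Fin d), l.length = N → ‖bkPhi P a s ((l.map a).prod)‖ ≤ F k := by
      intro l hl
      obtain ⟨k', h1, h2, h3⟩ := bk_analytic P a S N hS0 (C1 * L) Pm ((N : ℝ) / L) hW1 hPm0 hR hPb haW hz s hs l hl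
      refine (le_trans h3 (le_of_eq ?_)).trans (hmax k' (by
        rw [mem_filter, mem_range]; exact ⟨by omega, by simpa using h2⟩))
      simp [hF]
    have hF0 : 0 ≤ F k := by simp only [hF]; positivity
    have h6 := bk_change (bkPhi P a s) a bb u hbba C2 (F k) (fun g => by
      have h9 := single_le_sum (f := fun g : κ => ∑ j, ‖u g j‖) (fun _ _ => by positivity) (mem_univ g)
      rw [hC2]; exact h9.trans (le_add_of_nonneg_left zero_le_one)) (zero_le_one.trans hC21) hF0 N hB l hl
    have hξint : IsIntegral ℤ (∑ n, (p n : K) * wK l n * y s n) :=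
      IsIntegral.sum _ fun n _ => ((p n).2.mul (hwint l n)).mul (hyp s hs n).1
    have hξh : house (∑ n, (p n : K) * wK l n * y s n) ≤ L ^ d * (Pm * (C1 * L) ^ N * H ^ (S * L)) := by
      calc _ ≤ ∑ n : Fin d → Fin L, Pm * (C1 * L) ^ N * H ^ (S * L) := by
            refine (house_sum_le_sum_house _ _).trans (sum_le_sum fun n _ => ?_)
            refine (house_mul_le _ _).trans (mul_le_mul ((house_mul_le _ _).trans
              (mul_le_mul (hpb n) (hl ▸ hwh l n) (house_nonneg _) hPm0)) (hyp s hs n).2 (house_nonneg _)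
              (by positivity))
        _ = _ := by simp
    have hlt' : H ^ (S * L) * (C2 ^ N * F k) * (L ^ d * (Pm * (C1 * L) ^ N * H ^ (S * L))) ^ (d - 1) < 1 := by
      rw [hF]; exact hlt
    refine bk_small φ _ hξint (H ^ (S * L) * (C2 ^ N * F k)) _ ?_ hξh hlt'
    rw [hkey, norm_mul]
    refine mul_le_mul ?_ h6 (norm_nonneg _) (by positivity)
    rw [norm_pow, Complex.norm_natCast]
    exact pow_le_pow_left₀ (by positivity) hDH _
  have hP0 : P = 0 := by
    refine bk_vander P (fun n => φ (g0 (X n))) (fun n n' h => hXinj (g0.injective (φ.injective h))) fun k => ?_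
    have h7 := hzero k 0 (fun _ => hS0) (List.replicate k ⟨g0, hg0⟩) (by simp)
    rw [bkPhi_apply] at h7
    rw [← h7]
    refine sum_congr rfl fun n _ => ?_
    simp [hbb]
  apply hp0
  ext n
  have := congrFun hP0 n
  simp only [hP, Pi.zero_apply] at this
  simpa using this


lemma er_log_series (w : ℂ) (hw : ‖w‖ = 1) (hw1 : w ≠ 1) :
    Tendsto (fun N : ℕ => ∑ n ∈ range N, w ^ n / n) atTop (𝓝 (-Complex.log (1 - w))) := by
  have hre : w.re < 1 := by
    rcases lt_or_eq_of_le (hw ▸ Complex.re_le_norm w) with h | h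
    · exact h
    · exfalso; apply hw1
      have h2 := Complex.sq_norm w
      rw [hw, Complex.normSq_apply, h] at h2
      have : w.im = 0 := by
        have : w.im * w.im = 0 := by linarith
        simpa using this
      exact Complex.ext (by simp [h]) (by simp [this])
  have hconv : ∃ l, Tendsto (fun N : ℕ => ∑ n ∈ range N, w ^ n / n) atTop (𝓝 l) := by
    have hc : CauchySeq fun n ↦ ∑ i ∈ range n, (1 / ((i : ℝ) + 1)) • (w ^ (i + 1)) := by
      refine Antitone.cauchySeq_series_mul_of_tendsto_zero_of_bounded (b := 2 / ‖w - 1‖) ?_ 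
        tendsto_one_div_add_atTop_nhds_zero_nat ?_
      · intro a b hab
        simp only
        gcongr
      · intro n
        simp only [pow_succ]
        rw [← sum_mul, norm_mul, hw, mul_one, geom_sum_eq hw1, norm_div]
        gcongr
        calc _ ≤ ‖w ^ n‖ + ‖(1 : ℂ)‖ := norm_sub_le _ _
          _ = 2 := by rw [norm_pow, hw]; norm_num
    obtain ⟨l, hl⟩ := cauchySeq_tendsto_of_complete hc
    refine ⟨l, (tendsto_add_atTop_iff_nat 1).1 (hl.congr fun n => ?_)⟩
    rw [sum_range_succ']
    simp only [pow_zero, Nat.cast_zero, div_zero, add_zero]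
    refine sum_congr rfl fun i _ => ?_
    rw [Complex.real_smul]; push_cast; ring
  obtain ⟨l, hl⟩ := hconv
  have h1 := Complex.tendsto_tsum_powerSeries_nhdsWithin_lt hl
  rw [tendsto_map'_iff] at h1
  have h2 : Tendsto (fun x : ℝ => -Complex.log (1 - x * w)) (𝓝[<] 1) (𝓝 (-Complex.log (1 - w))) := by
    have : ContinuousAt (fun x : ℝ => -Complex.log (1 - x * w)) 1 := by
      refine ContinuousAt.neg (ContinuousAt.clog (by fun_prop) ?_)
      left; simp; exact hre
    have h3 := this.tendsto.mono_left (nhdsWithin_le_nhds (s := Set.Iio 1))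
    simpa using h3
  have h4 : ∀ᶠ x : ℝ in 𝓝[<] 1, -Complex.log (1 - x * w) = ((fun z ↦ ∑' n : ℕ, w ^ n / n * z ^ n) ∘ Complex.ofReal) x := by
    filter_upwards [Ioo_mem_nhdsLT (zero_lt_one (α := ℝ))] with x hx
    have := Complex.hasSum_taylorSeries_neg_log (z := x * w) (by
      rw [norm_mul, hw, mul_one, Complex.norm_real, Real.norm_of_nonneg hx.1.le]; exact hx.2)
    rw [← this.tsum_eq]
    simp only [Function.comp]
    congr 1; ext n
    rw [mul_pow]; ring
  rw [tendsto_nhds_unique (h2.congr' h4) h1]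
  exact hl

lemma er_fourier {q : ℕ} [NeZero q] (ψ : AddChar (ZMod q) ℂ) (hψ : ψ.IsPrimitive) (G : ZMod q → ℂ) (n : ZMod q) :
    ∑ b, (∑ a, G a * ψ (-(a * b))) * ψ (b * n) = q * G n := by
  simp only [sum_mul]
  rw [sum_comm]
  have : ∀ a, ∑ b, G a * ψ (-(a * b)) * ψ (b * n) = G a * if n - a = 0 then (q : ℂ) else 0 := by
    intro a
    have h := AddChar.sum_mulShift (n - a) hψ
    rw [ZMod.card] at h
    push_cast at h
    rw [← h, mul_sum]
    refine sum_congr rfl fun b _ => ?_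
    rw [mul_assoc, ← AddChar.map_add_eq_mul]
    congr 2; ring
  simp only [this, sub_eq_zero]
  rw [sum_eq_single n] <;> simp +contextual [eq_comm]
  ring

lemma er_norm_char {q : ℕ} [NeZero q] (ψ : AddChar (ZMod q) ℂ) (a : ZMod q) : ‖ψ a‖ = 1 := by
  have h : ψ a ^ q = 1 := by
    rw [← AddChar.map_nsmul_eq_pow]; simp
  exact Complex.norm_eq_one_of_pow_eq_one h (NeZero.ne q)

lemma er_decomp {q : ℕ} [NeZero q] (ψ : AddChar (ZMod q) ℂ) (hψ : ψ.IsPrimitive) (G : ZMod q → ℂ) :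
    Tendsto (fun N : ℕ => ∑ n ∈ range N, G n / n - (∑ a, G a) / q * ∑ n ∈ range N, 1 / (n : ℂ)) atTop
     (𝓝 ((1 / q) * ∑ b ∈ univ.erase (0 : ZMod q), (∑ a, G a * ψ (-(a * b))) * (-Complex.log (1 - ψ b)))) := by
  have hq : (q : ℂ) ≠ 0 := by exact_mod_cast NeZero.ne q
  have h1 : Tendsto (fun N : ℕ => (1 / q : ℂ) * ∑ b ∈ univ.erase (0 : ZMod q), (∑ a, G a * ψ (-(a * b))) *
      ∑ n ∈ range N, ψ b ^ n / n) atTop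
     (𝓝 ((1 / q) * ∑ b ∈ univ.erase (0 : ZMod q), (∑ a, G a * ψ (-(a * b))) * (-Complex.log (1 - ψ b)))) := by
    refine Tendsto.const_mul _ (tendsto_finsetSum _ fun b hb => Tendsto.const_mul _ ?_)
    refine er_log_series _ (er_norm_char ψ b) ?_
    intro h
    exact (ne_of_mem_erase hb) (hψ.zmod_char_eq_one_iff q b |>.1 h)
  refine h1.congr fun N => ?_
  have h2 : ∑ n ∈ range N, G n / n = (1 / q) * ∑ b, (∑ a, G a * ψ (-(a * b))) * ∑ n ∈ range N, ψ b ^ n / n := by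
    simp only [mul_sum (s := range N)]
    rw [sum_comm, mul_sum]
    refine sum_congr rfl fun n _ => ?_
    have h3 : G n = 1 / q * ∑ b, (∑ a, G a * ψ (-(a * b))) * ψ (b * n) := by
      rw [er_fourier ψ hψ]; field_simp
    rw [h3, mul_div_assoc, sum_div]
    congr 1
    refine sum_congr rfl fun b _ => ?_
    rw [← AddChar.map_nsmul_eq_pow, nsmul_eq_mul, mul_comm (n : ZMod q) b]
    ring
  rw [h2, ← add_sum_erase univ _ (mem_univ (0 : ZMod q))]
  simp only [mul_zero, neg_zero, AddChar.map_zero_eq_one, mul_one, one_pow]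
  ring

lemma er_sum_zero {q : ℕ} [NeZero q] (G : ZMod q → ℂ) (l : ℂ)
    (h : Tendsto (fun N : ℕ => ∑ n ∈ range N, G n / n) atTop (𝓝 l)) : ∑ a, G a = 0 := by
  have hq : (q : ℂ) ≠ 0 := by exact_mod_cast NeZero.ne q
  by_contra hne
  have hψ := AddChar.zmodChar_primitive_of_primitive_root q (Complex.isPrimitiveRoot_exp q (NeZero.ne q))
  have h1 := (h.sub (er_decomp _ hψ G)).const_mul ((q : ℂ) / ∑ a, G a)
  have h2 := (h1.congr (f₂ := fun N : ℕ => ((∑ n ∈ range N, 1 / (n : ℝ) : ℝ) : ℂ)) (fun N => by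
    push_cast; field_simp; ring)).norm
  refine not_tendsto_nhds_of_tendsto_atTop ?_ _ h2
  have h3 := (not_summable_iff_tendsto_nat_atTop_of_nonneg (fun n => by positivity)).1 Real.not_summable_one_div_natCast
  refine h3.congr fun N => ?_
  rw [Complex.norm_real, Real.norm_of_nonneg]
  exact sum_nonneg fun n _ => by positivity


theorem er_galois_aux {q : ℕ} [NeZero q] (K : Type*) [Field K] [NumberField K] [IsCyclotomicExtension {q} ℚ K] (F : ZMod q → ℤ)
    (h : Tendsto (fun N : ℕ => ∑ n ∈ range N, (F n : ℂ) / n) atTop (𝓝 0)) (t : (ZMod q)ˣ) :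
    Tendsto (fun N : ℕ => ∑ n ∈ range N, (F (t * n) : ℂ) / n) atTop (𝓝 0) := by
  classical
  have : IsGalois ℚ K := IsCyclotomicExtension.isGalois {q} ℚ K
  have hq : (q : ℂ) ≠ 0 := by exact_mod_cast NeZero.ne q
  have hζ : IsPrimitiveRoot (IsCyclotomicExtension.zeta q ℚ K) q := IsCyclotomicExtension.zeta_spec q ℚ K
  set ζ : K := IsCyclotomicExtension.zeta q ℚ K
  obtain ⟨φ⟩ : Nonempty (K →+* ℂ) := inferInstance
  have hz : IsPrimitiveRoot (φ ζ) q := hζ.map_of_injective φ.injective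
  set ψK : AddChar (ZMod q) K := AddChar.zmodChar q hζ.pow_eq_one with hψK
  set ψ : AddChar (ZMod q) ℂ := AddChar.zmodChar q hz.pow_eq_one with hψd
  have hψ : ψ.IsPrimitive := AddChar.zmodChar_primitive_of_primitive_root q hz
  have hφψ : ∀ a, φ (ψK a) = ψ a := fun a => by
    simp only [hψK, hψd, AddChar.zmodChar_apply, map_pow]
  have hgψ : ∀ (g : K ≃ₐ[ℚ] K) a, g (ψK a) = ψK ((IsCyclotomicExtension.Rat.galEquivZMod q K g : ZMod q) * a) := by
    intro g a
    have hx : (ψK a) ^ q = 1 := by rw [← AddChar.map_nsmul_eq_pow]; simp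
    rw [IsCyclotomicExtension.Rat.galEquivZMod_apply_of_pow_eq q K g hx, ← AddChar.map_nsmul_eq_pow]
    congr 1
    rw [nsmul_eq_mul, ZMod.natCast_zmod_val]
  have hψint : ∀ a, IsIntegral ℤ (ψK a) := fun a => by
    rw [hψK, AddChar.zmodChar_apply]
    exact (hζ.isIntegral (NeZero.pos q)).pow _
  set β : ZMod q → K := fun b => ∑ a, (F a : K) * ψK (-(a * b)) with hβ
  have hβint : ∀ b, IsIntegral ℤ (β b) := fun b => IsIntegral.sum _ fun a _ =>
    (by simpa using isIntegral_algebraMap (R := ℤ) (A := K) (x := F a) : IsIntegral ℤ (F a : K)).mul (hψint _)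
  set Λ : (K ≃ₐ[ℚ] K) → ℂ := fun g => ∑ b ∈ univ.erase (0 : ZMod q), φ (g (β b)) * (-Complex.log (1 - ψ b)) with hΛ
  have hgβ : ∀ g b, φ (g (β b)) = ∑ a, (F (((IsCyclotomicExtension.Rat.galEquivZMod q K g)⁻¹ : (ZMod q)ˣ) * a) : ℂ) * ψ (-(a * b)) := by
    intro g b
    simp only [hβ, map_sum, map_mul, map_intCast, hgψ, hφψ]
    set u := IsCyclotomicExtension.Rat.galEquivZMod q K g
    refine Fintype.sum_equiv (Units.mulLeft u) _ _ fun a => ?_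
    simp only [Units.mulLeft_apply]
    rw [Units.inv_mul_cancel_left]
    congr 2; ring
  have hsum0 : ∑ a, (F a : ℂ) = 0 := er_sum_zero (fun a => (F a : ℂ)) 0 h
  have hΛlim : ∀ g, Tendsto (fun N : ℕ => ∑ n ∈ range N, (F (((IsCyclotomicExtension.Rat.galEquivZMod q K g)⁻¹ : (ZMod q)ˣ) * n) : ℂ) / n) atTop
      (𝓝 (1 / q * Λ g)) := by
    intro g
    have h1 := er_decomp ψ hψ (fun a => (F (((IsCyclotomicExtension.Rat.galEquivZMod q K g)⁻¹ : (ZMod q)ˣ) * a) : ℂ))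
    have h2 : ∑ a : ZMod q, (F (((IsCyclotomicExtension.Rat.galEquivZMod q K g)⁻¹ : (ZMod q)ˣ) * a) : ℂ) = 0 := by
      rw [← hsum0]
      exact Fintype.sum_equiv (Units.mulLeft (IsCyclotomicExtension.Rat.galEquivZMod q K g)⁻¹) _ _ fun a => rfl
    rw [h2] at h1
    simp only [zero_div, zero_mul, sub_zero, ← hgβ] at h1
    exact h1
  have hΛ1 : Λ 1 = 0 := by
    have h1 := hΛlim 1
    simp only [map_one, inv_one, Units.val_one, one_mul] at h1
    have := tendsto_nhds_unique h h1
    field_simp at this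
    simpa using this.symm
  have hmain := bk_main φ Λ (by
    intro x
    have hm : ∀ b, ∃ m : ℤ, (m : K) = ∑ g : K ≃ₐ[ℚ] K, g (β b * x) := by
      intro b
      have hi : IsIntegral ℤ (Algebra.trace ℚ K (β b * x)) := Algebra.isIntegral_trace ((hβint b).mul x.2)
      obtain ⟨m, hm⟩ := IsIntegrallyClosed.isIntegral_iff.1 hi
      refine ⟨m, ?_⟩
      rw [← trace_eq_sum_automorphisms, ← hm]
      simp
    choose m hm using hm
    refine ⟨∏ b ∈ univ.erase (0 : ZMod q), ((1 - ψK b)⁻¹) ^ (m b), ?_⟩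
    have h1 : ∑ g, Λ g * φ (g (x : K)) = ∑ b ∈ univ.erase (0 : ZMod q), (m b : ℂ) * (-Complex.log (1 - ψ b)) := by
      simp only [hΛ, sum_mul]
      rw [sum_comm]
      refine sum_congr rfl fun b _ => ?_
      rw [← map_intCast φ, hm, map_sum, sum_mul]
      refine sum_congr rfl fun g _ => ?_
      rw [map_mul, map_mul]; ring
    rw [h1, Complex.exp_sum, map_prod]
    refine prod_congr rfl fun b hb => ?_
    rw [Complex.exp_int_mul, Complex.exp_neg, Complex.exp_log, map_zpow₀, map_inv₀, map_sub, map_one, hφψ]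
    intro h0
    exact (ne_of_mem_erase hb) (hψ.zmod_char_eq_one_iff q b |>.1 (sub_eq_zero.1 h0).symm)) hΛ1
  have h5 := hΛlim ((IsCyclotomicExtension.Rat.galEquivZMod q K).symm t⁻¹)
  rw [hmain, mul_zero] at h5
  simpa only [MulEquiv.apply_symm_apply, inv_inv] using h5

theorem er_galois {q : ℕ} [NeZero q] (F : ZMod q → ℤ)
    (h : Tendsto (fun N : ℕ => ∑ n ∈ range N, (F n : ℂ) / n) atTop (𝓝 0)) (t : (ZMod q)ˣ) :
    Tendsto (fun N : ℕ => ∑ n ∈ range N, (F (t * n) : ℂ) / n) atTop (𝓝 0) := by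
  have h1 : @IsCyclotomicExtension {q} ℚ (CyclotomicField q ℚ) _ _ DivisionRing.toRatAlgebra := by
    convert CyclotomicField.isCyclotomicExtension q ℚ
    · rfl
    · exact Subsingleton.elim _ _
  exact er_galois_aux (CyclotomicField q ℚ) F h t


lemma er_abel_ineq (w : ℕ → ℝ) (hw : Antitone w) (hw0 : ∀ n, 0 ≤ w n) (z : ℕ → ℂ) (B : ℝ)
    (hz : ∀ n, ‖∑ i ∈ range n, z i‖ ≤ B) (n : ℕ) : ‖∑ i ∈ range n, w i • z i‖ ≤ w 0 * B := by
  have hB : 0 ≤ B := (norm_nonneg _).trans (hz 0)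
  rcases Nat.eq_zero_or_pos n with rfl | hn
  · simpa using mul_nonneg (hw0 0) hB
  rw [Finset.sum_range_by_parts]
  refine (norm_sub_le _ _).trans ?_
  have h1 : ‖w (n - 1) • ∑ i ∈ range n, z i‖ ≤ w (n - 1) * B := by
    rw [norm_smul, Real.norm_of_nonneg (hw0 _)]
    exact mul_le_mul_of_nonneg_left (hz n) (hw0 _)
  have h2 : ‖∑ i ∈ range (n - 1), (w (i + 1) - w i) • ∑ i ∈ range (i + 1), z i‖ ≤
      ∑ i ∈ range (n - 1), (w i - w (i + 1)) * B := by
    refine norm_sum_le_of_le _ fun i _ => ?_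
    have h3 := hw (Nat.le_succ i)
    rw [norm_smul, Real.norm_of_nonpos (by simpa using h3), neg_sub]
    exact mul_le_mul_of_nonneg_left (hz _) (by simpa using h3)
  rw [← sum_mul, Finset.sum_range_sub'] at h2
  linarith

lemma er_abel_dirichlet (a : ℕ → ℂ) (C : ℝ) (ha : ∀ n, ‖a n‖ ≤ C)
    (h : Tendsto (fun N : ℕ => ∑ n ∈ range N, a n / n) atTop (𝓝 0)) :
    Tendsto (fun s : ℝ => LSeries a s) (𝓝[>] 1) (𝓝 0) := by
  rw [Metric.tendsto_nhds]
  intro e he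
  obtain ⟨T0, hT0⟩ := (Metric.tendsto_atTop.1 h) (e / 8) (by positivity)
  set T := T0 + 1
  have hT : ∀ N, T ≤ N → ‖∑ n ∈ range N, a n / n‖ ≤ e / 8 := fun N hN => by
    have := hT0 N (by omega)
    rw [dist_zero_right] at this; exact this.le
  have hcont : Tendsto (fun s : ℝ => ∑ n ∈ range T, LSeries.term a s n) (𝓝[>] 1) (𝓝 (∑ n ∈ range T, a n / n)) := by
    refine tendsto_finsetSum _ fun n _ => ?_
    rcases Nat.eq_zero_or_pos n with rfl | hn
    · simp
    · have hn' : (n : ℂ) ≠ 0 := by exact_mod_cast hn.ne'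
      have : ContinuousAt (fun s : ℝ => LSeries.term a s n) 1 := by
        simp only [LSeries.term_of_ne_zero hn.ne']
        refine ContinuousAt.div continuousAt_const ?_ ?_
        · exact ContinuousAt.const_cpow (Complex.continuous_ofReal.continuousAt) (Or.inl hn')
        · simpa using hn'
      have h3 := this.tendsto.mono_left (nhdsWithin_le_nhds (s := Set.Ioi 1))
      simpa [LSeries.term_of_ne_zero hn.ne'] using h3
  have hev := (Metric.tendsto_nhds.1 hcont) (e / 8) (by positivity)
  filter_upwards [hev, self_mem_nhdsWithin] with s hs hs1
  have hs1 : 1 < s := hs1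
  have hsum : LSeriesSummable a s := LSeriesSummable_of_bounded_of_one_lt_re (m := C) (fun n _ => ha n) (by simpa using hs1)
  have htend : Tendsto (fun N => ∑ n ∈ range N, LSeries.term a s n) atTop (𝓝 (LSeries a s)) :=
    hsum.hasSum.tendsto_sum_nat
  have hfirst : ‖∑ n ∈ range T, LSeries.term a s n‖ ≤ e / 4 := by
    have h1 := hT T le_rfl
    rw [dist_eq_norm] at hs
    calc _ = ‖(∑ n ∈ range T, LSeries.term a s n - ∑ n ∈ range T, a n / n) + ∑ n ∈ range T, a n / n‖ := by
            rw [sub_add_cancel]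
      _ ≤ _ := norm_add_le _ _
      _ ≤ e / 4 := by linarith
  have hsecond : ∀ N, ‖∑ i ∈ range N, LSeries.term a s (T + i)‖ ≤ (T : ℝ) ^ (-(s - 1)) * (e / 8 + e / 8) / 1 := by
    intro N
    have h2 := er_abel_ineq (fun i => ((T + i : ℕ) : ℝ) ^ (-(s - 1))) (fun i j hij => by
        refine Real.rpow_le_rpow_of_nonpos (by positivity) (by exact_mod_cast Nat.add_le_add_left hij T) (by linarith))
      (fun i => by positivity) (fun i => a (T + i) / (T + i : ℕ)) (e / 8 + e / 8) (fun n => by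
        have h5 : ∑ i ∈ range n, a (T + i) / (T + i : ℕ) = ∑ i ∈ range (T + n), a i / i - ∑ i ∈ range T, a i / i := by
          rw [sum_range_add, add_sub_cancel_left]
        rw [h5]
        exact (norm_sub_le _ _).trans (add_le_add (hT _ (by omega)) (hT _ le_rfl))) N
    rw [div_one]
    refine le_trans (le_of_eq ?_) h2
    congr 1
    refine sum_congr rfl fun i _ => ?_
    have hne : T + i ≠ 0 := by omega
    have hne' : ((T + i : ℕ) : ℂ) ≠ 0 := by exact_mod_cast hne
    rw [LSeries.term_of_ne_zero hne, Complex.real_smul, Complex.ofReal_cpow (by positivity)]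
    have h6 : ((T + i : ℕ) : ℂ) ^ (s : ℂ) = ((T + i : ℕ) : ℂ) ^ ((s - 1 : ℝ) : ℂ) * ((T + i : ℕ) : ℂ) := by
      have h7 := Complex.cpow_add ((s - 1 : ℝ) : ℂ) 1 hne'
      rw [Complex.cpow_one] at h7
      rw [← h7]; push_cast; ring_nf
    rw [h6, Complex.ofReal_neg, Complex.cpow_neg, Complex.ofReal_natCast]
    field_simp
  have hT1 : (T : ℝ) ^ (-(s - 1)) ≤ 1 := Real.rpow_le_one_of_one_le_of_nonpos (by
    have : 1 ≤ T := by omega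
    exact_mod_cast this) (by linarith)
  -- conclude
  have hle : ‖LSeries a s - ∑ n ∈ range T, LSeries.term a s n‖ ≤ (T : ℝ) ^ (-(s - 1)) * (e / 8 + e / 8) / 1 := by
    have h8 : Tendsto (fun N => ‖∑ i ∈ range N, LSeries.term a s (T + i)‖) atTop
        (𝓝 ‖LSeries a s - ∑ n ∈ range T, LSeries.term a s n‖) := by
      refine Tendsto.norm ?_
      have h9 := ((tendsto_add_atTop_iff_nat T).2 htend).sub_const (∑ n ∈ range T, LSeries.term a s n)
      refine h9.congr fun N => ?_
      rw [add_comm N T, sum_range_add, add_sub_cancel_left]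
    exact le_of_tendsto' h8 hsecond
  rw [dist_zero_right]
  calc ‖LSeries a s‖ = ‖(LSeries a s - ∑ n ∈ range T, LSeries.term a s n) + ∑ n ∈ range T, LSeries.term a s n‖ := by
        rw [sub_add_cancel]
    _ ≤ _ := norm_add_le _ _
    _ < e := by nlinarith


lemma er_fact_coprime {q m k : ℕ} (hm : m ∈ Nat.factoredNumbers q.primeFactors)
    (hk : k.Coprime q) : m.Coprime k := by
  by_contra h
  obtain ⟨p, hp, h1, h2⟩ := Nat.Prime.not_coprime_iff_dvd.1 h
  have h3 := Nat.mem_factoredNumbers'.1 hm p hp h1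
  exact Nat.Prime.not_coprime_iff_dvd.2 ⟨p, hp, h2, Nat.dvd_of_mem_primeFactors h3⟩ hk

lemma er_fact_exists {q : ℕ} (hq : q ≠ 0) (n : ℕ) (hn : n ≠ 0) :
    ∃ m ∈ Nat.factoredNumbers q.primeFactors, ∃ k : ℕ, k.Coprime q ∧ m * k = n := by
  induction n using induction_on_primes with
  | zero => exact absurd rfl hn
  | one => exact ⟨1, ⟨one_ne_zero, by simp⟩, 1, by simp, rfl⟩
  | prime_mul p a hp ih =>
    have ha : a ≠ 0 := by rintro rfl; simp at hn
    obtain ⟨m, hm, k, hk, rfl⟩ := ih ha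
    by_cases hpq : p ∣ q
    · refine ⟨p * m, Nat.mul_mem_factoredNumbers ⟨hp.ne_zero, ?_⟩ hm, k, hk, by ring⟩
      intro r hr
      rw [Nat.primeFactorsList_prime hp] at hr
      simp at hr
      subst hr
      simp [hp, hpq, hq]
    · exact ⟨m, hm, p * k, Nat.Coprime.mul_left ((Nat.Prime.coprime_iff_not_dvd hp).2 hpq) hk,
        by ring⟩

lemma er_fact_unique {q m k m' k' : ℕ} (hm : m ∈ Nat.factoredNumbers q.primeFactors)
    (hm' : m' ∈ Nat.factoredNumbers q.primeFactors) (hk : k.Coprime q) (hk' : k'.Coprime q)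
    (h : m * k = m' * k') : m = m' ∧ k = k' := by
  have h1 : m = m' := by
    apply Nat.dvd_antisymm
    · exact (er_fact_coprime hm hk').dvd_of_dvd_mul_right (h ▸ Dvd.intro _ rfl)
    · exact (er_fact_coprime hm' hk).dvd_of_dvd_mul_right (h ▸ Dvd.intro _ rfl)
  subst h1
  exact ⟨rfl, Nat.eq_of_mul_eq_mul_left (Nat.pos_of_ne_zero hm.1) h⟩

open Classical in
/-- the coefficient sequence restricted to numbers built from primes of `q` -/
noncomputable def erRestr (q : ℕ) (a : ℕ → ℂ) (m : ℕ) : ℂ :=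
  if m ∈ Nat.factoredNumbers q.primeFactors then a m else 0

lemma er_conv {q : ℕ} [NeZero q] (χ : DirichletCharacter ℂ q) (a : ℕ → ℂ) (a0 : a 0 = 0)
    (ha : ∀ m k : ℕ, k.Coprime q → a (m * k) = a m * χ (k : ZMod q)) :
    a = LSeries.convolution (erRestr q a) (fun n : ℕ => χ (n : ZMod q)) := by
  rw [LSeries.convolution_def]
  funext n
  rcases eq_or_ne n 0 with rfl | hn
  · simp [a0]
  obtain ⟨m, hm, k, hk, rfl⟩ := er_fact_exists (NeZero.ne q) n hn
  rw [Finset.sum_eq_single (m, k)]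
  · simp only [erRestr, hm, if_true]
    exact ha m k hk
  · rintro ⟨m', k'⟩ h1 h2
    simp only [Nat.mem_divisorsAntidiagonal] at h1
    by_cases hk' : k'.Coprime q
    · by_cases hm' : m' ∈ Nat.factoredNumbers q.primeFactors
      · obtain ⟨rfl, rfl⟩ := er_fact_unique hm' hm hk' hk h1.1
        exact absurd rfl h2
      · simp [erRestr, hm']
    · have : ¬ IsUnit (k' : ZMod q) := fun h => hk' ((ZMod.isUnit_iff_coprime _ _).1 h)
      simp [χ.map_nonunit this]
  · intro h
    simp [hn] at h

lemma er_summable_fact (q : ℕ) : Summable (fun m : Nat.factoredNumbers q.primeFactors => (1 : ℝ) / (m : ℕ)) ∧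
    ∑' m : Nat.factoredNumbers q.primeFactors, (1 : ℝ) / (m : ℕ) =
      ∏ p ∈ q.primeFactors, (1 - (p : ℝ)⁻¹)⁻¹ := by
  let f : ℕ →* ℝ := ⟨⟨fun n : ℕ => (n : ℝ)⁻¹, by simp⟩, by intro x y; simp [mul_comm]⟩
  have hf : ∀ n : ℕ, f n = (n : ℝ)⁻¹ := fun n => rfl
  have h := EulerProduct.summable_and_hasSum_factoredNumbers_prod_filter_prime_geometric
    (f := f)
    (fun {p} hp => by
      have : (1 : ℝ) < p := by exact_mod_cast hp.one_lt
      rw [hf, Real.norm_of_nonneg (by positivity)]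
      exact inv_lt_one_of_one_lt₀ this) q.primeFactors
  obtain ⟨h1, h2⟩ := h
  have h3 : q.primeFactors.filter Nat.Prime = q.primeFactors :=
    Finset.filter_true_of_mem fun p hp => Nat.prime_of_mem_primeFactors hp
  rw [h3] at h2
  simp only [hf] at h2
  constructor
  · refine h1.congr fun m => ?_
    simp [hf]
  · rw [← h2.tsum_eq]
    refine tsum_congr fun m => ?_
    simp

lemma er_summable_restr (q : ℕ) (a : ℕ → ℂ) (C : ℝ) (hC : ∀ n, ‖a n‖ ≤ C) :
    Summable (fun m : ℕ => ‖LSeries.term (erRestr q a) 1 m‖) := by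
  have h1 := (er_summable_fact q).1
  have h2 : Summable (Set.indicator (Nat.factoredNumbers q.primeFactors) (fun m : ℕ => (1 : ℝ) / m)) :=
    summable_subtype_iff_indicator.1 h1
  refine Summable.of_nonneg_of_le (fun _ => norm_nonneg _) (fun m => ?_) (h2.mul_left C)
  by_cases hm : m ∈ Nat.factoredNumbers q.primeFactors
  · rw [Set.indicator_of_mem hm, LSeries.term_of_ne_zero hm.1]
    simp only [erRestr, hm, if_true, Complex.cpow_one, norm_div, Complex.norm_natCast]
    rw [mul_one_div]
    gcongr
    exact hC m
  · rw [Set.indicator_of_notMem hm, LSeries.term_def]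
    simp [erRestr, hm]

lemma er_restr_tendsto (q : ℕ) (a : ℕ → ℂ) (C : ℝ) (hC : ∀ n, ‖a n‖ ≤ C) :
    Tendsto (fun s : ℝ => LSeries (erRestr q a) s) (𝓝[>] 1) (𝓝 (LSeries (erRestr q a) 1)) := by
  unfold LSeries
  refine tendsto_tsum_of_dominated_convergence (er_summable_restr q a C hC) ?_ ?_
  · intro m
    rcases eq_or_ne m 0 with rfl | hm
    · simp
    simp only [LSeries.term_of_ne_zero hm]
    have hc : ContinuousAt (fun s : ℝ => erRestr q a m / (m : ℂ) ^ (s : ℂ)) 1 := by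
      apply ContinuousAt.div continuousAt_const
      · have : ContinuousAt (fun z : ℂ => (m : ℂ) ^ z) ((1 : ℝ) : ℂ) :=
          continuousAt_const_cpow (by exact_mod_cast hm)
        exact ContinuousAt.comp (f := fun s : ℝ => (s : ℂ)) this Complex.continuous_ofReal.continuousAt
      · simp [hm]
    have := hc.tendsto
    simp only [Complex.ofReal_one] at this
    exact this.mono_left nhdsWithin_le_nhds
  · filter_upwards [self_mem_nhdsWithin] with s hs m
    exact LSeries.norm_term_le_of_re_le_re _ (by simpa using le_of_lt hs) m

lemma er_vanish {q : ℕ} [NeZero q] (χ : DirichletCharacter ℂ q) (a : ℕ → ℂ) (a0 : a 0 = 0)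
    (C : ℝ) (hC : ∀ n, ‖a n‖ ≤ C)
    (ha : ∀ m k : ℕ, k.Coprime q → a (m * k) = a m * χ (k : ZMod q))
    (h : Tendsto (fun N : ℕ => ∑ n ∈ range N, a n / n) atTop (𝓝 0)) :
    LSeries (erRestr q a) 1 = 0 := by
  have h1 := er_abel_dirichlet a C hC h
  have h2 := er_restr_tendsto q a C hC
  have hC0 : 0 ≤ C := (norm_nonneg _).trans (hC 0)
  have h3 : ∀ s : ℝ, 1 < s → LSeries a s = LSeries (erRestr q a) s * χ.LFunction s := by
    intro s hs
    have hs' : 1 < (s : ℂ).re := by simpa using hs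
    rw [DirichletCharacter.LFunction_eq_LSeries χ hs', ← LSeries_convolution', ← er_conv χ a a0 ha]
    · refine LSeriesSummable_of_bounded_of_one_lt_re (m := C) (fun n _ => ?_) hs'
      unfold erRestr
      split_ifs
      · exact hC n
      · simpa using hC0
    · exact LSeriesSummable_of_bounded_of_one_lt_re (m := 1) (fun n _ => χ.norm_le_one _) hs'
  have h4 : Tendsto (fun s : ℝ => LSeries (erRestr q a) s * χ.LFunction s) (𝓝[>] 1) (𝓝 0) := by
    refine h1.congr' ?_
    filter_upwards [self_mem_nhdsWithin] with s hs using h3 s hs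
  have hof : Tendsto (fun s : ℝ => (s : ℂ)) (𝓝[>] 1) (𝓝[≠] 1) := by
    refine tendsto_nhdsWithin_iff.2 ⟨?_, ?_⟩
    · have := (Complex.continuous_ofReal.tendsto 1)
      simp only [Complex.ofReal_one] at this
      exact this.mono_left nhdsWithin_le_nhds
    · filter_upwards [self_mem_nhdsWithin] with s hs
      simp only [Set.mem_compl_iff, Set.mem_singleton_iff]
      exact_mod_cast (ne_of_gt hs)
  by_cases hχ : χ = 1
  · subst hχ
    have h5 := (DirichletCharacter.LFunctionTrivChar_residue_one (N := q)).comp hof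
    have h6 := h2.mul h5
    have h7 : Tendsto (fun s : ℝ => ((s : ℂ) - 1)) (𝓝[>] 1) (𝓝 0) := by
      have := (hof.mono_right nhdsWithin_le_nhds).sub_const 1
      simpa using this
    have h8 := h7.mul h4
    have h9 := tendsto_nhds_unique h6 (h8.congr fun s => by
      simp only [Function.comp, DirichletCharacter.LFunctionTrivChar]; ring)
    rw [mul_zero] at h9
    refine (mul_eq_zero.1 h9).resolve_right ?_
    refine Finset.prod_ne_zero_iff.2 ?_
    intro p hp
    have := (Nat.prime_of_mem_primeFactors hp).one_lt
    rw [sub_ne_zero]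
    intro h
    have h10 : (p : ℂ) = 1 := by
      have := congrArg Inv.inv h
      simpa using this.symm
    have : p = 1 := by exact_mod_cast h10
    omega
  · have h5 : Tendsto (fun s : ℝ => χ.LFunction s) (𝓝[>] 1) (𝓝 (χ.LFunction 1)) :=
      ((DirichletCharacter.differentiable_LFunction hχ).continuous.tendsto 1).comp
        (hof.mono_right nhdsWithin_le_nhds)
    have h9 := tendsto_nhds_unique (h2.mul h5) h4
    exact (mul_eq_zero.1 h9).resolve_right (DirichletCharacter.LFunction_apply_one_ne_zero hχ)


lemma er_restr_zero {q : ℕ} [NeZero q] (F : ZMod q → ℤ) (hF : ∀ x, |F x| ≤ 1) (F0 : F 0 = 0)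
    (h : Tendsto (fun N : ℕ => ∑ n ∈ range N, (F n : ℂ) / n) atTop (𝓝 0)) :
    LSeries (erRestr q (fun n => (F n : ℂ))) 1 = 0 := by
  have hg := er_galois F h
  have hF' : ∀ x, ‖(F x : ℂ)‖ ≤ 1 := fun x => by
    rw [Complex.norm_intCast]; exact_mod_cast hF x
  let a : DirichletCharacter ℂ q → ℕ → ℂ := fun χ n => ∑ t : (ZMod q)ˣ, χ (t : ZMod q) * (F (t * n) : ℂ)
  have hC : ∀ χ n, ‖a χ n‖ ≤ Fintype.card (ZMod q)ˣ := by
    intro χ n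
    refine (norm_sum_le _ _).trans ?_
    refine (Finset.sum_le_card_nsmul _ _ 1 fun t _ => ?_).trans (by simp)
    rw [norm_mul]
    exact mul_le_one₀ (χ.norm_le_one _) (norm_nonneg _) (hF' _)
  have hv : ∀ χ, LSeries (erRestr q (a χ)) 1 = 0 := by
    intro χ
    refine er_vanish χ⁻¹ (a χ) (by simp [a, F0]) _ (hC χ) ?_ ?_
    · intro m k hk
      obtain ⟨u, hu⟩ : IsUnit (k : ZMod q) := (ZMod.isUnit_iff_coprime _ _).2 hk
      simp only [a]
      rw [Finset.sum_mul, ← Equiv.sum_comp (Equiv.mulRight u⁻¹)]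
      refine Finset.sum_congr rfl fun t _ => ?_
      rw [← hu, MulChar.inv_apply, Ring.inverse_unit]
      simp only [Equiv.coe_mulRight, Units.val_mul, map_mul, Nat.cast_mul, ← hu]
      have : (t : ZMod q) * ((u⁻¹ : (ZMod q)ˣ) : ZMod q) * (m * u) = t * m := by
        calc _ = (t : ZMod q) * m * (((u⁻¹ : (ZMod q)ˣ) : ZMod q) * u) := by ring
          _ = _ := by simp
      rw [this]
      ring
    · have h1 := tendsto_finsetSum (Finset.univ : Finset (ZMod q)ˣ) fun t _ =>
        (hg t).const_mul (χ (t : ZMod q))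
      simp only [mul_zero, Finset.sum_const_zero] at h1
      refine h1.congr fun N => ?_
      simp only [a, Finset.mul_sum, Finset.sum_div]
      rw [Finset.sum_comm]
      refine Finset.sum_congr rfl fun n _ => Finset.sum_congr rfl fun t _ => ?_
      ring
  have hsum : ∀ n : ℕ, ∑ χ : DirichletCharacter ℂ q, a χ n = (q.totient : ℂ) * (F n : ℂ) := by
    intro n
    simp only [a]
    rw [Finset.sum_comm]
    simp only [← Finset.sum_mul]
    rw [Finset.sum_eq_single 1]
    · have := DirichletCharacter.sum_char_inv_mul_char_eq ℂ (n := q) (a := 1) isUnit_one 1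
      simp at this
      simp [this]
    · intro t _ ht
      have := DirichletCharacter.sum_char_inv_mul_char_eq ℂ (n := q) (a := 1) isUnit_one t
      have h2 : (1 : ZMod q) ≠ (t : ZMod q) := fun h => ht (Units.ext h.symm)
      simp [h2] at this
      simp [this]
    · simp
  have hcard : (0 : ℝ) ≤ Fintype.card (ZMod q)ˣ := by positivity
  have h1 : LSeries (∑ χ : DirichletCharacter ℂ q, erRestr q (a χ)) 1 = 0 := by
    rw [LSeries_sum]
    · exact Finset.sum_eq_zero fun χ _ => hv χ
    · intro χ _
      exact Summable.of_norm (er_summable_restr q (a χ) _ (hC χ))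
  have h2 : (∑ χ : DirichletCharacter ℂ q, erRestr q (a χ)) =
      (q.totient : ℂ) • erRestr q (fun n => (F n : ℂ)) := by
    funext n
    simp only [Finset.sum_apply, Pi.smul_apply, smul_eq_mul]
    by_cases hn : n ∈ Nat.factoredNumbers q.primeFactors
    · simp only [erRestr, hn, if_true]
      exact hsum n
    · simp [erRestr, hn]
  rw [h2, LSeries_smul] at h1
  have h3 : (q.totient : ℂ) ≠ 0 := by
    have := Nat.totient_pos.2 (Nat.pos_of_ne_zero (NeZero.ne q))
    exact_mod_cast this.ne'
  simpa [h3] using h1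

lemma er_two_le {q : ℕ} [NeZero q] (F : ZMod q → ℤ) (hF : ∀ x, |F x| ≤ 1) (F0 : F 0 = 0)
    (F1 : |F 1| = 1)
    (h : Tendsto (fun N : ℕ => ∑ n ∈ range N, (F n : ℂ) / n) atTop (𝓝 0)) :
    2 ≤ ∏ p ∈ q.primeFactors, (1 - (p : ℝ)⁻¹)⁻¹ := by
  have h0 := er_restr_zero F hF F0 h
  have hF' : ∀ x, ‖(F x : ℂ)‖ ≤ 1 := fun x => by
    rw [Complex.norm_intCast]; exact_mod_cast hF x
  have hv := er_summable_restr q (fun n => (F n : ℂ)) 1 (fun n => hF' n)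
  rw [← (er_summable_fact q).2]
  set w := Set.indicator (Nat.factoredNumbers q.primeFactors) (fun m : ℕ => (1 : ℝ) / m) with hw
  have hws : Summable w := summable_subtype_iff_indicator.1 (er_summable_fact q).1
  have hwt : ∑' m : Nat.factoredNumbers q.primeFactors, (1 : ℝ) / (m : ℕ) = ∑' m, w m :=
    tsum_subtype (Nat.factoredNumbers q.primeFactors) (fun m : ℕ => (1 : ℝ) / m)
  rw [hwt]
  have hone : 1 ∈ Nat.factoredNumbers q.primeFactors := ⟨one_ne_zero, by simp⟩
  set v := LSeries.term (erRestr q (fun n => (F n : ℂ))) 1 with hvdef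
  have hvw : ∀ m, ‖v m‖ ≤ w m := by
    intro m
    by_cases hm : m ∈ Nat.factoredNumbers q.primeFactors
    · rw [hw, Set.indicator_of_mem hm, hvdef, LSeries.term_of_ne_zero hm.1]
      simp only [erRestr, hm, if_true, Complex.cpow_one, norm_div, Complex.norm_natCast]
      gcongr
      exact hF' _
    · rw [hw, Set.indicator_of_notMem hm, hvdef, LSeries.term_def]
      simp [erRestr, hm]
  have hv1 : ‖v 1‖ = 1 := by
    rw [hvdef, LSeries.term_of_ne_zero one_ne_zero]
    simp only [erRestr, hone, if_true]
    simp only [Nat.cast_one, Complex.one_cpow, div_one, Complex.norm_intCast]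
    exact_mod_cast F1
  have hw1 : w 1 = 1 := by rw [hw, Set.indicator_of_mem hone]; simp
  have hvs : Summable v := Summable.of_norm hv
  have e1 := hvs.tsum_eq_add_tsum_ite 1
  have e2 := hws.tsum_eq_add_tsum_ite 1
  have h0' : ∑' m, v m = 0 := h0
  rw [h0'] at e1
  have hle : ∀ m, ‖(if m = 1 then 0 else v m)‖ ≤ (if m = 1 then 0 else w m) := by
    intro m; split_ifs
    · simp
    · exact hvw m
  have hs2 : Summable (fun m => if m = 1 then 0 else w m) := by
    refine Summable.of_nonneg_of_le (fun m => (norm_nonneg _).trans (hle m)) (fun m => ?_) hws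
    split_ifs
    · exact (norm_nonneg _).trans (hvw m)
    · exact le_rfl
  have h5 := tsum_of_norm_bounded hs2.hasSum hle
  have h6 : v 1 = - ∑' m, (if m = 1 then 0 else v m) := by
    rw [eq_neg_iff_add_eq_zero]; exact e1.symm
  rw [h6, norm_neg] at hv1
  rw [e2, hw1]
  linarith




lemma er_false_two_le {q : ℕ} (hq : 1 < q) (h : ErdosConjectureFalse q) :
    2 ≤ ∏ p ∈ q.primeFactors, (1 - (p : ℝ)⁻¹)⁻¹ := by
  obtain ⟨f, ⟨h1, h2, h3⟩, h4⟩ := h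
  have : NeZero q := ⟨by omega⟩
  have hper : ∀ n k : ℕ, 1 ≤ n → f (n + k * q) = f n := by
    intro n k hn
    induction k with
    | zero => simp
    | succ k ih => rw [add_mul, one_mul, ← add_assoc, h1 _ (by omega), ih]
  let F : ZMod q → ℤ := fun x => f (x.val + q)
  have hFf : ∀ n : ℕ, 1 ≤ n → F n = f n := by
    intro n hn
    simp only [F, ZMod.val_natCast]
    have e1 := hper (n % q + q) (n / q) (by omega)
    have e2 : n % q + q + n / q * q = n + q := by
      have := Nat.mod_add_div n q
      rw [mul_comm] at this
      omega
    rw [← e1, e2, h1 n hn]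
  refine er_two_le F ?_ ?_ ?_ ?_
  · intro x
    simp only [F]
    by_cases hd : q ∣ x.val + q
    · rw [h3 _ (by omega) hd]; simp
    · rcases h2 _ (by omega) hd with h | h <;> rw [h] <;> simp
  · simp only [F, ZMod.val_zero, zero_add]
    exact h3 _ (by omega) dvd_rfl
  · have := hFf 1 le_rfl
    simp only [Nat.cast_one] at this
    rw [this]
    have hd : ¬ q ∣ 1 := by
      intro h; have := Nat.le_of_dvd one_pos h; omega
    rcases h2 1 le_rfl hd with h | h <;> rw [h] <;> simp
  · have h5 : Tendsto (fun N : ℕ => ((∑ n ∈ Finset.Icc 1 N, (f n : ℝ) / n : ℝ) : ℂ)) atTop (𝓝 0) := by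
      have := (Complex.continuous_ofReal.tendsto 0).comp h4
      rw [Complex.ofReal_zero] at this
      exact this
    rw [← tendsto_add_atTop_iff_nat 1]
    refine h5.congr fun N => ?_
    rw [Finset.sum_range_succ']
    simp only [Nat.cast_zero, div_zero, add_zero]
    rw [← Finset.Ico_add_one_right_eq_Icc, Finset.sum_Ico_eq_sum_range]
    push_cast
    refine Finset.sum_congr (by simp) fun n _ => ?_
    have := hFf (n + 1) (by omega)
    push_cast at this
    rw [this, add_comm 1 n, add_comm (1 : ℂ)]

/-- the reciprocal of Euler's function -/
noncomputable def erPhi : ArithmeticFunction ℝ := ⟨fun n => ((n.totient : ℝ))⁻¹, by simp⟩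

lemma erPhi_apply (n : ℕ) : erPhi n = ((n.totient : ℝ))⁻¹ := rfl

lemma erPhi_mult : erPhi.IsMultiplicative := by
  refine ⟨by simp [erPhi_apply], fun {m n} h => ?_⟩
  simp [erPhi_apply, Nat.totient_mul h, mul_comm]

lemma er_prod_le (q : ℕ) (hq : q ≠ 0) :
    ∏ p ∈ q.primeFactors, (1 - (p : ℝ)⁻¹)⁻¹ ≤ ∑ d ∈ q.divisors, erPhi d := by
  have hsq : Squarefree (∏ p ∈ q.primeFactors, p) := by
    refine Finset.squarefree_prod_of_pairwise_isCoprime ?_ ?_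
    · intro a ha b hb hab
      exact Nat.coprime_iff_isRelPrime.1 ((Nat.coprime_primes (Nat.prime_of_mem_primeFactors ha)
        (Nat.prime_of_mem_primeFactors hb)).2 hab)
    · intro p hp
      exact (Nat.prime_of_mem_primeFactors hp).prime.squarefree
  have h1 := erPhi_mult.prodPrimeFactors_one_add_of_squarefree hsq
  rw [Nat.primeFactors_prod (fun p hp => Nat.prime_of_mem_primeFactors hp)] at h1
  have h2 : ∏ p ∈ q.primeFactors, (1 - (p : ℝ)⁻¹)⁻¹ = ∏ p ∈ q.primeFactors, (1 + erPhi p) := by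
    refine Finset.prod_congr rfl fun p hp => ?_
    have hp := Nat.prime_of_mem_primeFactors hp
    have : (1 : ℝ) < p := by exact_mod_cast hp.one_lt
    rw [erPhi_apply, Nat.totient_prime hp, Nat.cast_sub hp.one_lt.le]
    have h3 : (p : ℝ) - 1 ≠ 0 := by linarith
    have h4 : (p : ℝ) ≠ 0 := by linarith
    push_cast
    field_simp
    try ring
  rw [h2, h1]
  refine Finset.sum_le_sum_of_subset_of_nonneg ?_ fun d _ _ => by rw [erPhi_apply]; positivity
  exact Nat.divisors_subset_of_dvd hq (Nat.prod_primeFactors_dvd q)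

lemma er_false_one_le {q : ℕ} (hq : 1 < q) (h : ErdosConjectureFalse q) :
    1 ≤ ∑ d ∈ q.divisors.filter (fun d => 1 < d), erPhi d := by
  have h1 := er_false_two_le hq h
  have h2 := er_prod_le q (by omega)
  have h3 : q.divisors = insert 1 (q.divisors.filter (fun d => 1 < d)) := by
    ext d
    simp only [mem_insert, mem_filter, Nat.mem_divisors]
    constructor
    · rintro ⟨a, b⟩
      have := Nat.pos_of_dvd_of_pos a (by omega)
      by_cases hd : d = 1
      · exact Or.inl hd
      · exact Or.inr ⟨⟨a, b⟩, by omega⟩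
    · rintro (rfl | h)
      · simp; omega
      · exact h.1
  rw [h3, Finset.sum_insert (by simp)] at h2
  have : erPhi 1 = 1 := by simp [erPhi_apply]
  linarith

/-- the Euler-product weight -/
noncomputable def erW (n : ℕ) : ℝ := if Odd n then ((n : ℝ) * n.totient)⁻¹ else 0

lemma er_totient_sq (n : ℕ) (hn : Odd n) : n ≤ n.totient ^ 2 := by
  induction n using Nat.recOnPosPrimePosCoprime with
  | zero => simp
  | one => simp
  | prime_pow p k hp hk =>
    have hp2 : Odd p := by
      rw [Nat.odd_pow_iff (by omega)] at hn; exact hn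
    have h3 : 3 ≤ p := by
      have := hp.two_le
      rcases hp2 with ⟨c, rfl⟩; omega
    rw [Nat.totient_prime_pow hp hk]
    obtain ⟨k, rfl⟩ := Nat.exists_eq_succ_of_ne_zero hk.ne'
    obtain ⟨r, rfl⟩ := Nat.exists_eq_add_of_le h3
    simp only [Nat.succ_eq_add_one, Nat.add_sub_cancel]
    have e : 3 + r - 1 = r + 2 := by omega
    rw [e, pow_succ, mul_pow]
    refine Nat.mul_le_mul ?_ (by nlinarith)
    exact Nat.le_self_pow two_ne_zero _
  | coprime a b ha hb hab iha ihb =>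
    rw [Nat.odd_mul] at hn
    rw [Nat.totient_mul hab, mul_pow]
    exact Nat.mul_le_mul (iha hn.1) (ihb hn.2)

lemma erW_nonneg (n : ℕ) : 0 ≤ erW n := by
  unfold erW; split_ifs <;> positivity

lemma erW_summable : Summable erW := by
  have h := (Real.summable_one_div_nat_rpow (p := 3 / 2)).2 (by norm_num)
  refine Summable.of_nonneg_of_le erW_nonneg (fun n => ?_) h
  unfold erW
  split_ifs with hn
  · have h1 := er_totient_sq n hn
    have hpos : 0 < n := hn.pos
    have hn' : (0 : ℝ) < n := by exact_mod_cast hpos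
    rw [← one_div]
    apply one_div_le_one_div_of_le (by positivity)
    have h2 : (n : ℝ) ^ (3 / 2 : ℝ) = n * (n : ℝ) ^ (1 / 2 : ℝ) := by
      rw [← Real.rpow_one_add' hn'.le (by norm_num)]; norm_num
    rw [h2, ← Real.sqrt_eq_rpow]
    refine mul_le_mul_of_nonneg_left ?_ hn'.le
    apply Real.sqrt_le_iff.2 ⟨by positivity, by exact_mod_cast h1⟩
  · positivity

lemma erW_pow {p : ℕ} (hp : p.Prime) : ∑' e : ℕ, erW (p ^ e) =
    if Odd p then 1 + (p : ℝ) / (((p : ℝ) - 1) * ((p : ℝ) ^ 2 - 1)) else 1 := by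
  split_ifs with ho
  · have hp1 : (1 : ℝ) < p := by exact_mod_cast hp.one_lt
    have hW : ∀ e : ℕ, erW (p ^ (e + 1)) = ((p : ℝ) * (p - 1))⁻¹ * (((p : ℝ) ^ 2)⁻¹) ^ e := by
      intro e
      unfold erW
      rw [if_pos ho.pow, Nat.totient_prime_pow hp (by omega)]
      rw [Nat.add_sub_cancel, inv_pow, ← mul_inv]
      congr 1
      push_cast [Nat.cast_sub hp.one_lt.le]
      ring
    have hr0 : (0 : ℝ) ≤ ((p : ℝ) ^ 2)⁻¹ := by positivity
    have hr1 : ((p : ℝ) ^ 2)⁻¹ < 1 := inv_lt_one_of_one_lt₀ (by nlinarith)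
    have hg := (hasSum_geometric_of_lt_one hr0 hr1).mul_left (((p : ℝ) * (p - 1))⁻¹)
    have hs : HasSum (fun e => erW (p ^ (e + 1)))
        (((p : ℝ) * (p - 1))⁻¹ * (1 - ((p : ℝ) ^ 2)⁻¹)⁻¹) := by
      simpa only [hW] using hg
    have := (hasSum_nat_add_iff (f := fun e => erW (p ^ e)) 1).1 hs
    rw [this.tsum_eq]
    simp only [Finset.sum_range_one, pow_zero]
    have : erW 1 = 1 := by simp [erW]
    rw [this, add_comm]
    congr 1
    have h1 : (p : ℝ) - 1 ≠ 0 := by linarith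
    have h2 : (p : ℝ) ^ 2 - 1 ≠ 0 := by nlinarith
    have h3 : (p : ℝ) ≠ 0 := by linarith
    field_simp
    try ring
  · rw [tsum_eq_single 0]
    · simp [erW]
    · intro e he
      unfold erW
      rw [if_neg]
      rwa [Nat.odd_pow_iff he]

lemma erW_tsum : ∑' n, erW n = ∏' p : {p : ℕ // p.Prime ∧ Odd p},
        (1 + ((p : ℕ) : ℝ) / ((((p : ℕ) : ℝ) - 1) * (((p : ℕ) : ℝ) ^ 2 - 1))) := by
  have h := EulerProduct.eulerProduct_hasProd (f := erW) (by simp [erW]) (fun {m n} hmn => by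
    unfold erW
    by_cases hm : Odd m <;> by_cases hn : Odd n <;> simp [hm, hn, Nat.odd_mul]
    rw [Nat.totient_mul hmn]; push_cast; ring) (by
      simpa [abs_of_nonneg (erW_nonneg _)] using erW_summable) (by simp [erW])
  rw [← h.tprod_eq]
  let g : {p : ℕ // p.Prime ∧ Odd p} → Nat.Primes := fun p => ⟨p.1, p.2.1⟩
  have hg : Function.Injective g := by
    intro a b hab
    exact Subtype.ext (congrArg (fun x : Nat.Primes => (x : ℕ)) hab)
  rw [← hg.tprod_eq]
  · refine tprod_congr fun p => ?_
    have := erW_pow p.2.1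
    rw [if_pos p.2.2] at this
    exact this
  · intro p hp
    have h2 := erW_pow p.2
    by_cases ho : Odd (p : ℕ)
    · exact ⟨⟨p.1, p.2, ho⟩, rfl⟩
    · rw [if_neg ho] at h2
      exact absurd h2 hp


/-- count of `q ≤ X`, `q ≡ 1 mod 4`, divisible by `d` -/
def erA (d X : ℕ) : ℕ := ((Finset.Icc 1 X).filter (fun q => q % 4 = 1 ∧ d ∣ q)).card

lemma erA_bound (d X : ℕ) (hd : Odd d) : |(erA d X : ℝ) - X / (4 * d)| ≤ 1 := by
  have hco : Nat.Coprime 4 d := by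
    have : Nat.Coprime (2 ^ 2) d := Nat.Coprime.pow_left 2 (Nat.coprime_two_left.2 hd)
    simpa using this
  have hdpos : 0 < d := hd.pos
  let v := Nat.chineseRemainder hco 1 0
  have hv := v.2
  have h1 : erA d X = ((Finset.Ioc 0 X).filter (fun x => x ≡ (v : ℕ) [MOD 4 * d])).card := by
    unfold erA
    congr 1
    ext x
    simp only [mem_filter, mem_Icc, mem_Ioc]
    refine and_congr (by omega) ?_
    rw [← Nat.modEq_and_modEq_iff_modEq_mul hco]
    constructor
    · rintro ⟨a, b⟩
      exact ⟨Nat.ModEq.trans (show x % 4 = 1 % 4 by omega) hv.1.symm,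
        ((Nat.modEq_zero_iff_dvd).2 b).trans hv.2.symm⟩
    · rintro ⟨a, b⟩
      have a' : x % 4 = 1 % 4 := a.trans hv.1
      exact ⟨by omega, Nat.modEq_zero_iff_dvd.1 (b.trans hv.2)⟩
  have h2 := Nat.Ioc_filter_modEq_card 0 X (r := 4 * d) (by positivity) (v : ℕ)
  rw [← h1] at h2
  set A := ((X : ℚ) - (v : ℕ)) / ((4 * d : ℕ) : ℚ) with hA
  set B := (((0 : ℕ) : ℚ) - (v : ℕ)) / ((4 * d : ℕ) : ℚ) with hB
  have hAB : A - B = X / (4 * d) := by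
    rw [hA, hB, ← sub_div]; push_cast; ring
  have hAB0 : B ≤ A := by
    have : (0 : ℚ) ≤ X / (4 * d) := by positivity
    linarith
  have hfl : ⌊B⌋ ≤ ⌊A⌋ := Int.floor_le_floor hAB0
  rw [max_eq_left (by omega)] at h2
  have h3 : (erA d X : ℚ) = ⌊A⌋ - ⌊B⌋ := by exact_mod_cast h2
  have key : |(erA d X : ℚ) - X / (4 * d)| ≤ 1 := by
    rw [h3, ← hAB, abs_le]
    have a1 := Int.floor_le A
    have a2 := Int.lt_floor_add_one A
    have b1 := Int.floor_le B
    have b2 := Int.lt_floor_add_one B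
    constructor <;> linarith
  have key2 : ((|(erA d X : ℚ) - X / (4 * d)| : ℚ) : ℝ) ≤ ((1 : ℚ) : ℝ) := Rat.cast_le.2 key
  push_cast at key2
  exact key2

lemma erA_zero (d X : ℕ) (h : X < d) : erA d X = 0 := by
  unfold erA
  rw [Finset.card_eq_zero, Finset.filter_eq_empty_iff]
  rintro q hq ⟨_, h2⟩
  simp at hq
  have := Nat.le_of_dvd (by omega) h2
  omega

/-- weighted count -/
noncomputable def erG (X d : ℕ) : ℝ :=
  if Odd d ∧ 1 < d then erPhi d * ((erA d X : ℝ) / ((X : ℝ) / 4)) else 0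

/-- the weight without the term one -/
noncomputable def erV (d : ℕ) : ℝ := if d = 1 then 0 else erW d

lemma erPhi_nonneg (d : ℕ) : 0 ≤ erPhi d := by rw [erPhi_apply]; positivity

lemma erV_eq (d : ℕ) : erV d = if Odd d ∧ 1 < d then erPhi d * (d : ℝ)⁻¹ else 0 := by
  unfold erV erW
  rw [erPhi_apply]
  by_cases hd : Odd d
  · by_cases h1 : d = 1
    · simp [h1]
    · have := hd.pos
      rw [if_neg h1, if_pos hd, if_pos ⟨hd, by omega⟩, mul_inv, mul_comm]
  · simp [hd]

lemma erV_summable : Summable erV := by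
  refine Summable.of_nonneg_of_le (fun d => ?_) (fun d => ?_) erW_summable
  · unfold erV; split_ifs
    · exact le_rfl
    · exact erW_nonneg d
  · unfold erV; split_ifs
    · exact erW_nonneg d
    · exact le_rfl

lemma erG_bound (X d : ℕ) : ‖erG X d‖ ≤ 5 * erV d := by
  rw [erV_eq]
  unfold erG
  split_ifs with h
  · have hp := erPhi_nonneg d
    rw [Real.norm_of_nonneg (by positivity)]
    rw [mul_left_comm]
    refine mul_le_mul_of_nonneg_left ?_ hp
    rcases lt_or_ge X d with hX | hX
    · rw [erA_zero d X hX]; simp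
    · have hd : (0 : ℝ) < d := by exact_mod_cast h.1.pos
      have hX' : (d : ℝ) ≤ X := by exact_mod_cast hX
      have hX0 : (0 : ℝ) < X := by linarith
      have h1 := (abs_le.1 (erA_bound d X h.1)).2
      rw [div_le_iff₀ (by positivity)]
      have h2 : (X : ℝ) / (4 * d) + 1 ≤ 5 * (d : ℝ)⁻¹ * (X / 4) := by
        have h3 : (1 : ℝ) ≤ X / d := by rwa [le_div_iff₀ hd, one_mul]
        have h4 : (X : ℝ) / (4 * d) = X / d / 4 := by field_simp
        have h5 : 5 * (d : ℝ)⁻¹ * (X / 4) = 5 / 4 * (X / d) := by field_simp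
        rw [h4, h5]; linarith
      linarith
  · simp

lemma erG_tendsto (d : ℕ) : Tendsto (fun X => erG X d) atTop (𝓝 (erV d)) := by
  rw [erV_eq]
  unfold erG
  split_ifs with h
  · refine Tendsto.const_mul _ ?_
    have hd : (0 : ℝ) < d := by exact_mod_cast h.1.pos
    rw [tendsto_iff_norm_sub_tendsto_zero]
    have h0 : Tendsto (fun X : ℕ => (4 : ℝ) / X) atTop (𝓝 0) :=
      tendsto_const_div_atTop_nhds_zero_nat 4
    refine squeeze_zero' (Eventually.of_forall fun _ => norm_nonneg _) ?_ h0
    filter_upwards [eventually_gt_atTop 0] with X hX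
    have hX0 : (0 : ℝ) < X := by exact_mod_cast hX
    have e : (erA d X : ℝ) / ((X : ℝ) / 4) - (d : ℝ)⁻¹ = ((erA d X : ℝ) - X / (4 * d)) * (4 / X) := by
      field_simp
    rw [e, norm_mul, Real.norm_of_nonneg (show (0 : ℝ) ≤ 4 / X by positivity), Real.norm_eq_abs]
    have := mul_le_mul_of_nonneg_right (erA_bound d X h.1) (show (0 : ℝ) ≤ 4 / X by positivity)
    simpa using this
  · exact tendsto_const_nhds

lemma erG_summable (X : ℕ) : Summable (erG X) :=
  Summable.of_norm_bounded (erV_summable.mul_left 5) (erG_bound X)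

open scoped Classical in
lemma er_count_le (X : ℕ) :
    (((Finset.Icc 1 X).filter (fun q => q % 4 = 1 ∧ ErdosConjectureFalse q)).card : ℝ) / ((X : ℝ) / 4)
      ≤ 1 / ((X : ℝ) / 4) + ∑' d, erG X d := by
  set S := (Finset.Icc 1 X).filter (fun q => q % 4 = 1 ∧ ErdosConjectureFalse q) with hS
  set T := (Finset.Icc 1 X).filter (fun q => q % 4 = 1) with hT
  have hst : ∀ q ∈ S, q ∈ T := by
    intro q hq
    simp only [hS, hT, mem_filter] at hq ⊢
    exact ⟨hq.1, hq.2.1⟩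
  have h1 : (S.card : ℝ) ≤ 1 + ((S.erase 1).card : ℝ) := by
    have := Finset.pred_card_le_card_erase (s := S) (a := 1)
    have h2 : S.card ≤ 1 + (S.erase 1).card := by omega
    exact_mod_cast h2
  have h2 : ((S.erase 1).card : ℝ) ≤
      ∑ q ∈ T, ∑ d ∈ (Finset.range (X + 1)).filter (fun d => Odd d ∧ 1 < d), if d ∣ q then erPhi d else 0 := by
    rw [Finset.card_eq_sum_ones]
    push_cast
    refine (Finset.sum_le_sum fun q hq => ?_).trans (Finset.sum_le_sum_of_subset_of_nonneg
      (fun q hq => hst q (Finset.mem_of_mem_erase hq)) fun q _ _ => Finset.sum_nonneg fun d _ => ?_)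
    · have hq1 := Finset.ne_of_mem_erase hq
      have hq2 := Finset.mem_of_mem_erase hq
      simp only [hS, mem_filter, mem_Icc] at hq2
      refine (er_false_one_le (q := q) (by omega) hq2.2.2).trans ?_
      rw [← Finset.sum_filter]
      refine Finset.sum_le_sum_of_subset_of_nonneg ?_ fun d _ _ => erPhi_nonneg d
      intro d hd
      simp only [mem_filter, Nat.mem_divisors, mem_range] at hd ⊢
      have hle := Nat.le_of_dvd (by omega) hd.1.1
      refine ⟨⟨by omega, ?_, hd.2⟩, hd.1.1⟩
      have hqo : Odd q := Nat.odd_iff.2 (by omega)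
      exact hqo.of_dvd_nat hd.1.1
    · split_ifs
      · exact erPhi_nonneg d
      · exact le_rfl
  rw [Finset.sum_comm] at h2
  have h3 : ∀ d, ∑ q ∈ T, (if d ∣ q then erPhi d else 0) = erPhi d * erA d X := by
    intro d
    rw [← Finset.sum_filter, Finset.sum_const, nsmul_eq_mul, mul_comm]
    congr 2
    unfold erA
    rw [hT, Finset.filter_filter]
  simp only [h3] at h2
  have h4 : (∑ d ∈ (Finset.range (X + 1)).filter (fun d => Odd d ∧ 1 < d), erPhi d * erA d X) / ((X : ℝ) / 4)
      ≤ ∑' d, erG X d := by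
    rw [Finset.sum_div, Finset.sum_filter]
    refine le_trans (le_of_eq ?_) ((erG_summable X).sum_le_tsum (Finset.range (X + 1)) fun d _ => ?_)
    · refine Finset.sum_congr rfl fun d _ => ?_
      unfold erG
      simp only [mul_div_assoc]
    · unfold erG
      split_ifs
      · have := erPhi_nonneg d
        positivity
      · exact le_rfl
  refine le_trans ?_ (add_le_add_right h4 _)
  rw [← add_div]
  gcongr
  linarith

lemma erV_tsum : ∑' d, erV d = (∏' p : {p : ℕ // p.Prime ∧ Odd p},
        (1 + ((p : ℕ) : ℝ) / ((((p : ℕ) : ℝ) - 1) * (((p : ℕ) : ℝ) ^ 2 - 1)))) - 1 := by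
  have h := erW_summable.tsum_eq_add_tsum_ite 1
  have h1 : erW 1 = 1 := by simp [erW]
  rw [erW_tsum, h1] at h
  rw [h]
  unfold erV
  ring

end Helpers

open scoped Classical in
theorem erdos_false_density_first_moment :
    atTop.limsup (fun X : ℕ =>
      (((Finset.Icc 1 X).filter
        (fun q => q % 4 = 1 ∧ ErdosConjectureFalse q)).card : ℝ) / ((X : ℝ) / 4)) ≤
      (∏' p : {p : ℕ // p.Prime ∧ Odd p},
        (1 + ((p : ℕ) : ℝ) / ((((p : ℕ) : ℝ) - 1) * (((p : ℕ) : ℝ) ^ 2 - 1)))) - 1 := by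
  have h1 : Tendsto (fun X : ℕ => 1 / ((X : ℝ) / 4) + ∑' d, erG X d) atTop (𝓝 (0 + ∑' d, erV d)) := by
    refine Tendsto.add ?_ ?_
    · have h0 : Tendsto (fun X : ℕ => (4 : ℝ) / X) atTop (𝓝 0) :=
        tendsto_const_div_atTop_nhds_zero_nat 4
      refine h0.congr fun X => ?_
      rw [one_div_div]
    · exact tendsto_tsum_of_dominated_convergence (erV_summable.mul_left 5) erG_tendsto
        (Eventually.of_forall fun X d => erG_bound X d)
  rw [zero_add, erV_tsum] at h1
  rw [← h1.limsup_eq]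
  refine Filter.limsup_le_limsup (Eventually.of_forall er_count_le) ?_ h1.isBoundedUnder_le
  refine Filter.IsBoundedUnder.isCoboundedUnder_le ?_
  exact ⟨0, by
    rw [Filter.eventually_map]
    exact Eventually.of_forall fun X => by positivity⟩
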